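/- arXiv:2312.17727 — 8 statements merged into one kernel-verified Lean document; each statement's English description precedes it below -/
import Mathlib

section
/- There exists a countable group Γ for which the semigroup Zariski topology Zar⁺(Γ) and the group Zariski topology Zar(Γ) are distinct topologies on Γ. -/
/-!
Let `Γ = ⟨a, c, t₀, t₁, … | [tₙ⁻¹ a tₙ, c] = 1 for all n⟩`. The set `{g | [g⁻¹ a g, c] ≠ 1}` is open
in `Zar(Γ)` and contains no `tₙ`; it contains `1` because `a` and `c` do not commute in `Γ`, as is
seen in a quotient inside `Perm (Fin 4)`. So `tₙ` does not converge to `1` in `Zar(Γ)`.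

In `Zar⁺(Γ)`, however, `tₙ → 1`. The key is the (unrestricted) wreath product of `Γ` with an
infinite cyclic group `⟨x⟩`, into which `Γ` embeds by `ι`, as the coordinate at the identity.
A positive word `u₀ x u₁ x ⋯ x uₖ` takes in it the value `(u₀, u₁, …, uₖ) · xᵏ`, so this value
determines the product `u₀ u₁ ⋯ uₖ`, which is the value of the word at `x = 1`
(`monoidEval_one_eq_of_wreathEval_eq`).
Moreover `x⁻¹ ι(Γ) x` lives in another coordinate and hence commutes with `ι(Γ)`. Therefore, for
each `n`, sending `tₙ` to `x` and every other generator `s` to `ι(s)` respects the relations and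
defines a homomorphism `θₙ` from `Γ` to the wreath product. Since each coefficient of positive
words `W`, `V` involves finitely many generators, `θₙ` maps `W(tₙ)` and `V(tₙ)` to the wreath
product values of `W` and `V` for all large `n` (`eventually_theta_monoidEval`). Hence
`W(tₙ) = V(tₙ)` for some large `n` forces `W(1) = V(1)`.
-/

/-- Evaluation of an element of `G * ⟨x⟩` (the free product of a group `G` with an
infinite cyclic group) at an element `g : G`, substituting `g` for `x`. -/
noncomputable def groupEval {G : Type*} [Group G] (g : G) :
    Monoid.Coprod G (Multiplicative ℤ) →* G :=
  Monoid.Coprod.lift (MonoidHom.id G) (zpowersHom G g)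

/-- Evaluation of an element of `M * ⟨x⟩⁺` (the free product of a monoid `M` with the free
monogenic monoid) at an element `m : M`, substituting `m` for `x`. -/
noncomputable def monoidEval {M : Type*} [Monoid M] (m : M) :
    Monoid.Coprod M (Multiplicative ℕ) →* M :=
  Monoid.Coprod.lift (MonoidHom.id M) (powersHom M m)

/-- The group Zariski topology `Zar(G)`. -/
noncomputable def zariskiGroup (G : Type*) [Group G] : TopologicalSpace G :=
  TopologicalSpace.generateFrom
    {s | ∃ W : Monoid.Coprod G (Multiplicative ℤ), s = {g : G | groupEval g W ≠ 1}}

/-- The semigroup Zariski topology `Zar⁺(M)`. -/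
noncomputable def zariskiSemigroup (M : Type*) [Monoid M] : TopologicalSpace M :=
  TopologicalSpace.generateFrom
    {s | ∃ W V : Monoid.Coprod M (Multiplicative ℕ),
      s = {m : M | monoidEval m W ≠ monoidEval m V}}

namespace ZariskiCounterexample

open Filter Monoid.Coprod
open scoped commutatorElement

/-- The wreath product of `G` with the infinite cyclic group, with unrestricted base
`Multiplicative ℤ → G`. -/
abbrev Wreath (G : Type*) [Group G] := RegularWreathProduct G (Multiplicative ℤ)

/-- The embedding of `G` into the wreath product as the coordinate at the identity. -/
noncomputable def coordHom (G : Type*) [Group G] : G →* Wreath G where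
  toFun g := ⟨Pi.mulSingle 1 g, 1⟩
  map_one' := by ext <;> simp
  map_mul' g h := by ext <;> simp [Pi.mulSingle_mul]

/-- The generator of the infinite cyclic group acting on the base by a shift. -/
def shift (G : Type*) [Group G] : Wreath G := ⟨1, Multiplicative.ofAdd 1⟩

/-- The value in the wreath product of a positive word over `G`, with `x` sent to the shift. -/
noncomputable def wreathEval (G : Type*) [Group G] :
    Monoid.Coprod G (Multiplicative ℕ) →* Wreath G :=
  lift (coordHom G) (powersHom (Wreath G) (shift G))

section Wreath

variable {G : Type*} [Group G]

lemma commute_conj_shift (g h : G) :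
    Commute ((shift G)⁻¹ * coordHom G g * shift G) (coordHom G h) := by
  have hne : (Multiplicative.ofAdd (1 : ℤ)) ≠ 1 := by decide
  ext x
  · by_cases hx : x = 1
    · subst hx
      simp [coordHom, shift, Pi.mulSingle_apply, hne]
    · simp [coordHom, shift, Pi.mulSingle_apply, hx]
  · simp [coordHom, shift]

lemma wreathEval_inl_mul_left (g : G) (U : Monoid.Coprod G (Multiplicative ℕ))
    (i : Multiplicative ℤ) :
    (wreathEval G (inl g * U)).left i =
      (Pi.mulSingle 1 g : Multiplicative ℤ → G) i * (wreathEval G U).left i := by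
  simp [wreathEval, coordHom]

lemma wreathEval_x_mul_left (U : Monoid.Coprod G (Multiplicative ℕ)) (i : ℤ) :
    (wreathEval G (inr (Multiplicative.ofAdd 1) * U)).left (Multiplicative.ofAdd i) =
      (wreathEval G U).left (Multiplicative.ofAdd (i - 1)) := by
  have h : (Multiplicative.ofAdd (1 : ℤ))⁻¹ * Multiplicative.ofAdd i
      = Multiplicative.ofAdd (i - 1) := by
    rw [← ofAdd_neg, ← ofAdd_add]; congr 1; ring
  simp [wreathEval, shift, h]

/-- The wreath value of a positive word has trivial negative coordinates, and the ordered product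
of its remaining coordinates (finitely many of which are nontrivial) is the value of the word
at `1`. -/
lemma wreathEval_prod (U : Monoid.Coprod G (Multiplicative ℕ)) :
    (∀ i : ℤ, i < 0 → (wreathEval G U).left (Multiplicative.ofAdd i) = 1) ∧
    ∀ᶠ N : ℕ in atTop, ((List.range N).map fun i : ℕ =>
      (wreathEval G U).left (Multiplicative.ofAdd (i : ℤ))).prod = monoidEval 1 U := by
  induction U using induction_on' with
  | one => simp
  | inl_mul g U ih =>
    refine ⟨fun i hi => ?_, ?_⟩
    · have : Multiplicative.ofAdd i ≠ 1 := by
        rw [Ne, ofAdd_eq_one]; exact hi.ne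
      rw [wreathEval_inl_mul_left, ih.1 i hi, Pi.mulSingle_eq_of_ne this, one_mul]
    · filter_upwards [ih.2, eventually_ge_atTop 1] with N hN h1
      obtain ⟨M, rfl⟩ := Nat.exists_eq_add_of_le' h1
      rw [map_mul (monoidEval (1 : G)), ← hN]
      have h : ∀ i : ℕ, (Pi.mulSingle 1 g : Multiplicative ℤ → G)
          (Multiplicative.ofAdd ((i + 1 : ℕ) : ℤ)) = 1 := fun i => by
        refine Pi.mulSingle_eq_of_ne ?_ _
        rw [Ne, ofAdd_eq_one]; omega
      simp only [List.range_succ_eq_map, List.map_cons, List.map_map, List.prod_cons,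
        Function.comp_def, wreathEval_inl_mul_left, Nat.succ_eq_add_one, h, one_mul]
      simp [monoidEval, mul_assoc]
  | inr_mul n U ih =>
    have key : ∀ k : ℕ, (inr (Multiplicative.ofAdd (k + 1)) :
        Monoid.Coprod G (Multiplicative ℕ)) * U =
          inr (Multiplicative.ofAdd 1) * (inr (Multiplicative.ofAdd k) * U) := fun k => by
      rw [← mul_assoc, ← map_mul, ← ofAdd_add, add_comm]
    obtain ⟨k, rfl⟩ := Multiplicative.ofAdd.surjective n
    induction k with
    | zero => simpa using ih
    | succ k ihk =>
      rw [key]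
      generalize (inr (Multiplicative.ofAdd k) * U : Monoid.Coprod G (Multiplicative ℕ)) = V at ihk
      refine ⟨fun i hi => ?_, ?_⟩
      · rw [wreathEval_x_mul_left, ihk.1 _ (by omega)]
      · obtain ⟨N₀, hN₀⟩ := eventually_atTop.1 ihk.2
        filter_upwards [eventually_ge_atTop (N₀ + 1)] with N hN
        obtain ⟨M, rfl⟩ := Nat.exists_eq_add_of_le' (le_of_add_le_right hN)
        have hx : monoidEval (1 : G) (inr (Multiplicative.ofAdd 1)) = 1 := by simp [monoidEval]
        rw [map_mul (monoidEval (1 : G)), hx, one_mul, ← hN₀ M (by omega)]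
        have h0 := ihk.1 (0 - 1) (by norm_num)
        simp only [List.range_succ_eq_map, List.map_cons, List.map_map, List.prod_cons,
          Function.comp_def, wreathEval_x_mul_left, Nat.succ_eq_add_one, Nat.cast_zero, h0,
          one_mul, Nat.cast_add, Nat.cast_one, add_sub_cancel_right]

/-- Positive words with the same wreath value have the same value at `1`. -/
lemma monoidEval_one_eq_of_wreathEval_eq {U V : Monoid.Coprod G (Multiplicative ℕ)}
    (h : wreathEval G U = wreathEval G V) : monoidEval 1 U = monoidEval 1 V := by
  obtain ⟨N, hU, hV⟩ := ((wreathEval_prod U).2.and (wreathEval_prod V).2).exists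
  rw [← hU, ← hV, h]

end Wreath

/-- The relators `(tₙ⁻¹ a tₙ) c (tₙ⁻¹ a tₙ)⁻¹ c⁻¹`, where `a`, `c` and `tₙ` are the generators
`inl true`, `inl false` and `inr n`. -/
def rels : Set (FreeGroup (Bool ⊕ ℕ)) :=
  Set.range fun n : ℕ =>
    ⁅(FreeGroup.of (Sum.inr n))⁻¹ * FreeGroup.of (Sum.inl true) * FreeGroup.of (Sum.inr n),
      FreeGroup.of (Sum.inl false)⁆

/-- The group `⟨a, c, t₀, t₁, … | [tₙ⁻¹ a tₙ, c] = 1 for all n⟩`. -/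
abbrev Gam := PresentedGroup rels

/-- The generator `a`. -/
def genA : Gam := PresentedGroup.of (.inl true)

/-- The generator `c`. -/
def genC : Gam := PresentedGroup.of (.inl false)

/-- The generator `tₙ`. -/
def genT (n : ℕ) : Gam := PresentedGroup.of (.inr n)

lemma commutator_genT (n : ℕ) : ⁅(genT n)⁻¹ * genA * genT n, genC⁆ = 1 :=
  PresentedGroup.one_of_mem (rels := rels) ⟨n, rfl⟩

lemma lift_rels {H : Type*} [Group H] (f : Bool ⊕ ℕ → H)
    (hf : ∀ n, ⁅(f (.inr n))⁻¹ * f (.inl true) * f (.inr n), f (.inl false)⁆ = 1) :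
    ∀ r ∈ rels, FreeGroup.lift f r = 1 := by
  rintro _ ⟨n, rfl⟩
  simpa [map_commutatorElement] using hf n

/-- In `Perm (Fin 4)` take `a = (0 1)`, `c = (1 2)` and `tₙ = (1 3)`, so that `tₙ⁻¹ a tₙ = (0 3)`. -/
lemma commutator_genA_genC_ne_one : ⁅genA, genC⁆ ≠ 1 := by
  let f : Bool ⊕ ℕ → Equiv.Perm (Fin 4) :=
    Sum.elim (fun b => bif b then Equiv.swap 0 1 else Equiv.swap 1 2) fun _ => Equiv.swap 1 3
  have hf := lift_rels f (fun n => by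
    simp only [f, Sum.elim_inr, Sum.elim_inl, cond_true, cond_false]
    decide)
  intro h
  have himg := congrArg (PresentedGroup.toGroup hf) h
  simp only [map_commutatorElement, genA, genC, PresentedGroup.toGroup.of, map_one, f,
    Sum.elim_inl, cond_true, cond_false] at himg
  revert himg
  decide

/-- The images of the generators under `θₙ`. -/
noncomputable def thetaGen (n : ℕ) : Bool ⊕ ℕ → Wreath Gam :=
  Function.update (fun s => coordHom Gam (PresentedGroup.of s)) (.inr n) (shift Gam)

lemma thetaGen_of_ne {n : ℕ} {s : Bool ⊕ ℕ} (h : s ≠ .inr n) :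
    thetaGen n s = coordHom Gam (PresentedGroup.of s) :=
  Function.update_of_ne h _ _

lemma thetaGen_rels (n : ℕ) : ∀ r ∈ rels, FreeGroup.lift (thetaGen n) r = 1 := by
  refine lift_rels _ fun m => ?_
  rw [thetaGen_of_ne (s := .inl true) (by simp), thetaGen_of_ne (s := .inl false) (by simp)]
  by_cases hm : m = n
  · subst hm
    rw [thetaGen, Function.update_self, commutatorElement_eq_one_iff_commute]
    exact commute_conj_shift _ _
  · rw [thetaGen_of_ne (by simpa using hm)]
    simpa [map_commutatorElement, genA, genC, genT]
      using congrArg (coordHom Gam) (commutator_genT m)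

/-- The homomorphism `θₙ` sending `tₙ` to the shift and every other generator to its copy in the
coordinate at the identity. -/
noncomputable def theta (n : ℕ) : Gam →* Wreath Gam :=
  PresentedGroup.toGroup (thetaGen_rels n)

lemma theta_genT (n : ℕ) : theta n (genT n) = shift Gam := by
  rw [theta, genT, PresentedGroup.toGroup.of, thetaGen, Function.update_self]

lemma eventually_theta_eq (g : Gam) : ∀ᶠ n in atTop, theta n g = coordHom Gam g := by
  have hg : g ∈ Subgroup.closure (Set.range (PresentedGroup.of (rels := rels))) := by
    rw [PresentedGroup.closure_range_of]; trivial
  induction hg using Subgroup.closure_induction with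
  | mem _ h =>
    obtain ⟨s, rfl⟩ := h
    have hs : ∀ᶠ n : ℕ in atTop, s ≠ .inr n := by
      rcases s with b | m
      · simp
      · filter_upwards [eventually_gt_atTop m] with n hn
        simpa using hn.ne
    filter_upwards [hs] with n hn
    rw [theta, PresentedGroup.toGroup.of, thetaGen_of_ne hn]
  | one => simp
  | mul _ _ _ _ hx hy =>
    filter_upwards [hx, hy] with n h1 h2
    rw [map_mul, map_mul, h1, h2]
  | inv _ _ hx =>
    filter_upwards [hx] with n h1
    rw [map_inv, map_inv, h1]

lemma eventually_theta_monoidEval (U : Monoid.Coprod Gam (Multiplicative ℕ)) :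
    ∀ᶠ n in atTop, theta n (monoidEval (genT n) U) = wreathEval Gam U := by
  induction U using induction_on with
  | inl g => simpa [monoidEval, wreathEval] using eventually_theta_eq g
  | inr k => simp [monoidEval, wreathEval, theta_genT]
  | mul U V hU hV =>
    filter_upwards [hU, hV] with n h1 h2
    rw [map_mul, map_mul, map_mul, h1, h2]

lemma tendsto_genT : Tendsto genT atTop (@nhds Gam (zariskiSemigroup Gam) 1) := by
  refine TopologicalSpace.tendsto_nhds_generateFrom_iff.2 ?_
  rintro _ ⟨W, V, rfl⟩ h1
  filter_upwards [eventually_theta_monoidEval W, eventually_theta_monoidEval V] with n hW hV heq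
  refine h1 (monoidEval_one_eq_of_wreathEval_eq ?_)
  rw [← hW, ← hV, heq]

/-- The word `[x⁻¹ a x, c]`. -/
noncomputable def commWord : Monoid.Coprod Gam (Multiplicative ℤ) :=
  ⁅(inr (Multiplicative.ofAdd (1 : ℤ)))⁻¹ * inl genA * inr (Multiplicative.ofAdd (1 : ℤ)),
    (inl genC : Monoid.Coprod Gam (Multiplicative ℤ))⁆

lemma groupEval_commWord (g : Gam) : groupEval g commWord = ⁅g⁻¹ * genA * g, genC⁆ := by
  simp [commWord, groupEval, map_commutatorElement]

lemma zariski_ne : zariskiSemigroup Gam ≠ zariskiGroup Gam := by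
  intro heq
  have hopen : @IsOpen Gam (zariskiGroup Gam) {g : Gam | groupEval g commWord ≠ 1} :=
    TopologicalSpace.isOpen_generateFrom_of_mem ⟨commWord, rfl⟩
  rw [← heq] at hopen
  have h1 : (1 : Gam) ∈ {g : Gam | groupEval g commWord ≠ 1} := by
    simpa [groupEval_commWord] using commutator_genA_genC_ne_one
  have hev : ∀ᶠ n in atTop, genT n ∈ {g : Gam | groupEval g commWord ≠ 1} :=
    tendsto_genT (@IsOpen.mem_nhds Gam (zariskiSemigroup Gam) 1 _ hopen h1)
  obtain ⟨n, hn⟩ := hev.exists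
  exact hn (by rw [groupEval_commWord, commutator_genT])

end ZariskiCounterexample

/-- There exists a countable group `Γ` for which the semigroup Zariski topology and the
group Zariski topology are distinct topologies on `Γ`. -/
theorem exists_countable_group_zariski_ne :
    ∃ (Γ : Type) (_ : Group Γ), Countable Γ ∧
      zariskiSemigroup Γ ≠ zariskiGroup Γ := by
  exact ⟨ZariskiCounterexample.Gam, inferInstance,
    (PresentedGroup.mk_surjective ZariskiCounterexample.rels).countable,
    ZariskiCounterexample.zariski_ne⟩
end

section
/- For the group Γ presented by generators a_1, …, a_{k+1}, x_1, x_2, … and relators w_i = a_1 x_i^{-1} a_2 x_i a_3 x_i^{-1} a_4 x_i ⋯ a_{k-1} x_i^{-1} a_k x_i (i ∈ ℕ), where k ≥ 8 is a fixed even integer, the semigroup Zariski topology Zar⁺(Γ) is strictly coarser than the group Zariski topology Zar(Γ); in particular Zar⁺(Γ) ≠ Zar(Γ). -/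
/-- The alphabet `B = {a_1, …, a_{k+1}} ∪ {x_1, x_2, …}`. -/
abbrev Alphabet (k : ℕ) := Fin (k + 1) ⊕ ℕ

/-- The generator `a_{j+1}` of the free group on `B` (0-indexed: `gena k 0 = a_1`, …,
`gena k k = a_{k+1}`); indices are taken mod `k+1`. -/
def gena (k j : ℕ) : FreeGroup (Alphabet k) :=
  FreeGroup.of (Sum.inl ⟨j % (k + 1), Nat.mod_lt _ (Nat.succ_pos k)⟩)

/-- The generator `x_i` of the free group on `B`. -/
def genx (k i : ℕ) : FreeGroup (Alphabet k) :=
  FreeGroup.of (Sum.inr i)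

/-- The relator `w_i = a_1 x_i⁻¹ a_2 x_i a_3 x_i⁻¹ a_4 x_i ⋯ a_{k-1} x_i⁻¹ a_k x_i`. -/
def relw (k i : ℕ) : FreeGroup (Alphabet k) :=
  ((List.range (k / 2)).map
    (fun l => gena k (2 * l) * (genx k i)⁻¹ * gena k (2 * l + 1) * genx k i)).prod

/-- The set of relators `{w_i : i ∈ ℕ}`. -/
def rels (k : ℕ) : Set (FreeGroup (Alphabet k)) := Set.range (relw k)

/-- The group `Γ = ⟨B ∣ w_1, w_2, …⟩`. -/
abbrev Gamma (k : ℕ) := PresentedGroup (rels k)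

/-- The image `a_{j+1}` in `Γ` (0-indexed). -/
def aΓ (k j : ℕ) : Gamma k := PresentedGroup.of (Sum.inl ⟨j % (k + 1), Nat.mod_lt _ (Nat.succ_pos k)⟩)

/-- The image `x_i` in `Γ`. -/
def xΓ (k i : ℕ) : Gamma k := PresentedGroup.of (Sum.inr i)

/-- The set `X = {x_1, x_2, …} ⊆ Γ`. -/
def Xset (k : ℕ) : Set (Gamma k) := Set.range (xΓ k)

open Monoid

/-! ### Homomorphisms out of `Γ` -/

theorem lift_relw {Q : Type*} [Group Q] (m : ℕ) (f : Alphabet (2 * m) → Q) (i : ℕ) :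
    FreeGroup.lift f (relw (2 * m) i) = ((List.finRange m).map fun l : Fin m =>
      FreeGroup.lift f (gena (2 * m) (2 * l)) * (f (Sum.inr i))⁻¹ *
        FreeGroup.lift f (gena (2 * m) (2 * l + 1)) * f (Sum.inr i)).prod := by
  have h2 : 2 * m / 2 = m := by omega
  rw [relw, h2, ← List.map_coe_finRange_eq_range, map_list_prod, List.map_map, List.map_map]
  congr 1
  refine List.map_congr_left fun l _ => ?_
  simp [genx]

theorem relw_eq_one (m i : ℕ) : ((List.finRange m).map fun l : Fin m =>
      aΓ (2 * m) (2 * l) * (xΓ (2 * m) i)⁻¹ * aΓ (2 * m) (2 * l + 1) * xΓ (2 * m) i).prod = 1 := by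
  have h1 : PresentedGroup.mk (rels (2 * m)) (relw (2 * m) i) = 1 :=
    PresentedGroup.one_of_mem ⟨i, rfl⟩
  have h2 : PresentedGroup.mk (rels (2 * m)) =
      FreeGroup.lift (fun b => (PresentedGroup.of b : Gamma (2 * m))) := by
    ext b
    simp [PresentedGroup.of]
  rw [h2, lift_relw] at h1
  simpa [gena, aΓ, xΓ] using h1

/-- Every tuple `e` in a group `Q` extends to a homomorphism on `Γ` that kills all `x_i` and sends
consecutive pairs `a_{2l+1}, a_{2l+2}` to `e_l⁻¹, e_l`; the image of `a_{k+1}` is arbitrary. -/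
theorem exists_pairHom {Q : Type*} [Group Q] (m : ℕ) (e : Fin m → Q) (c : Q) :
    ∃ φ : Gamma (2 * m) →* Q, (∀ l : Fin m, φ (aΓ (2 * m) (2 * l)) = (e l)⁻¹) ∧
      (∀ l : Fin m, φ (aΓ (2 * m) (2 * l + 1)) = e l) ∧ φ (aΓ (2 * m) (2 * m)) = c ∧
      ∀ i, φ (xΓ (2 * m) i) = 1 := by
  let f : Alphabet (2 * m) → Q := Sum.elim
    (fun j => if h : j.val / 2 < m then
      (if j.val % 2 = 0 then (e ⟨j.val / 2, h⟩)⁻¹ else e ⟨j.val / 2, h⟩) else c) (fun _ => 1)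
  have he : ∀ l : Fin m,
      f (Sum.inl ⟨(2 * l.val) % (2 * m + 1), Nat.mod_lt _ (Nat.succ_pos _)⟩) = (e l)⁻¹ := by
    intro l
    have h1 : (2 * l.val) % (2 * m + 1) = 2 * l.val := Nat.mod_eq_of_lt (by omega)
    have h2 : 2 * l.val / 2 = l.val := by omega
    simp [f, h1, h2]
  have ho : ∀ l : Fin m,
      f (Sum.inl ⟨(2 * l.val + 1) % (2 * m + 1), Nat.mod_lt _ (Nat.succ_pos _)⟩) = e l := by
    intro l
    have h1 : (2 * l.val + 1) % (2 * m + 1) = 2 * l.val + 1 := Nat.mod_eq_of_lt (by omega)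
    have h2 : (2 * l.val + 1) / 2 = l.val := by omega
    have h3 : (2 * l.val + 1) % 2 = 1 := by omega
    simp [f, h1, h2]
  have hf : ∀ r ∈ rels (2 * m), FreeGroup.lift f r = 1 := by
    rintro _ ⟨i, rfl⟩
    rw [lift_relw]
    apply List.prod_eq_one
    intro y hy
    obtain ⟨l, -, rfl⟩ := List.mem_map.1 hy
    simp only [gena, FreeGroup.lift_apply_of, he, ho]
    simp [f]
  refine ⟨PresentedGroup.toGroup hf, fun l => ?_, fun l => ?_, ?_, fun i => ?_⟩
  · exact (PresentedGroup.toGroup.of hf).trans (he l)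
  · exact (PresentedGroup.toGroup.of hf).trans (ho l)
  · refine (PresentedGroup.toGroup.of hf).trans ?_
    have h1 : (2 * m) % (2 * m + 1) = 2 * m := Nat.mod_eq_of_lt (by omega)
    simp [f, h1]
  · exact (PresentedGroup.toGroup.of hf).trans (by simp [f])

/-! ### The base group of the HNN extension -/

/-- The affine permutations `s : x ↦ 2x` and `t : x ↦ x + 1` of `ℚ` work: `st` fixes `-2`, while a
nontrivial power of `ts` fixes only `-1`. -/
theorem exists_perm : ∃ s t : Equiv.Perm ℚ, ∀ n n' : ℤ, (s * t) ^ n = (t * s) ^ n' → n' = 0 := by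
  let s : Equiv.Perm ℚ := Equiv.mulLeft₀ 2 two_ne_zero
  let t : Equiv.Perm ℚ := Equiv.addRight 1
  refine ⟨s, t, fun n n' h => ?_⟩
  have h1 : ∀ n : ℤ, ((s * t) ^ n) (-2) = -2 := fun n =>
    Equiv.Perm.zpow_apply_eq_self_of_apply_eq_self (by simp [s, t]; norm_num) n
  have h2 : ∀ n : ℤ, ((t * s) ^ n) (-2) = -2 ^ n - 1 := by
    intro n
    induction n with
    | zero => norm_num
    | succ n ih =>
      rw [add_comm, zpow_add, Equiv.Perm.mul_apply, ih, zpow_add₀ two_ne_zero]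
      simp [s, t]; ring
    | pred n ih =>
      rw [sub_eq_add_neg, add_comm, zpow_add, Equiv.Perm.mul_apply, ih,
        zpow_add₀ two_ne_zero, zpow_neg_one, Equiv.Perm.inv_eq_iff_eq]
      simp [s, t]; ring
  have h3 := h1 n
  rw [h, h2 n'] at h3
  have h4 : (2 : ℚ) ^ n' = 1 := by linarith
  exact (zpow_eq_one_iff_right₀ (by norm_num) (by norm_num)).1 h4

/-- An element `f` of a free group of rank at least two is trivial if its value on tuples in groups
does not change when a tuple `e` is replaced by `e'` with `∏ e_l⁻¹ e'_l = 1`. Comparing the free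
basis `e'` with the tuples `(g, 1, …, 1)` and `(1, g, 1, …, 1)` shows that `f` is a power of
both `e'_0 R` and `R e'_0`, where `R` is the product of the other generators. -/
theorem eq_one_of_invariant (p : ℕ) (f : FreeGroup (Fin (p + 2)))
    (hf : ∀ e e' : Fin (p + 2) → FreeGroup (Fin (p + 2)),
      ((List.finRange (p + 2)).map fun l => (e l)⁻¹ * e' l).prod = 1 →
        FreeGroup.lift e' f = FreeGroup.lift e f) : f = 1 := by
  have hid : FreeGroup.lift FreeGroup.of f = f :=
    DFunLike.congr_fun (FreeGroup.lift_of_eq_id _) f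
  have hpow : ∀ (e : Fin (p + 2) → FreeGroup (Fin (p + 2))) (g : FreeGroup (Fin (p + 2))),
      (∀ l, e l ∈ Subgroup.zpowers g) → ∃ n : ℤ, g ^ n = FreeGroup.lift e f := by
    intro e g h
    have h1 : (FreeGroup.lift e).range ≤ Subgroup.zpowers g :=
      FreeGroup.range_lift_le (by rintro _ ⟨l, rfl⟩; exact h l)
    exact Subgroup.mem_zpowers_iff.1 (h1 ⟨f, rfl⟩)
  let R : FreeGroup (Fin (p + 2)) := ((List.finRange (p + 1)).map fun l => FreeGroup.of l.succ).prod
  let z : FreeGroup (Fin (p + 2)) := FreeGroup.of 0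
  have key0 : ∃ n : ℤ, (z * R) ^ n = f := by
    let e : Fin (p + 2) → FreeGroup (Fin (p + 2)) := Fin.cons (z * R) fun _ => 1
    rw [← hid, hf e FreeGroup.of]
    · refine hpow e _ fun l => ?_
      cases l using Fin.cases <;> simp [e, one_mem]
    · simp only [List.finRange_succ (n := p + 1), List.map_cons, List.map_map, List.prod_cons]
      simp [e, Function.comp_def, R, z, mul_assoc]
  have key1 : ∃ n : ℤ, (R * z) ^ n = f := by
    let e : Fin (p + 2) → FreeGroup (Fin (p + 2)) := Fin.cons 1 (Fin.cons (R * z) fun _ => 1)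
    rw [← hid, hf e FreeGroup.of]
    · refine hpow e _ fun l => ?_
      cases l using Fin.cases with
      | zero => simp [e, one_mem]
      | succ l => cases l using Fin.cases <;> simp [e, one_mem]
    · simp only [R, List.finRange_succ, List.map_cons, List.map_map, List.prod_cons, e]
      simp [Function.comp_def, z, mul_assoc]
  obtain ⟨n, hn⟩ := key0
  obtain ⟨n', hn'⟩ := key1
  obtain ⟨s, t, hst⟩ := exists_perm
  let ψ : FreeGroup (Fin (p + 2)) →* Equiv.Perm ℚ :=
    FreeGroup.lift (Fin.cons s (Fin.cons t fun _ => 1))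
  have hz : ψ z = s := by simp [ψ, z]
  have hR : ψ R = t := by
    simp only [R, List.finRange_succ, List.map_cons, List.map_map, List.prod_cons, map_mul,
      map_list_prod]
    simp [ψ, Function.comp_def]
  have h0 : n' = 0 := hst n n' (by rw [← hz, ← hR, ← map_mul, ← map_mul, ← map_zpow, ← map_zpow,
    hn, hn'])
  rw [← hn', h0, zpow_zero]

/-- The base group is `Γ` with generators `b_l` adjoined subject to the single relation
`a_1 b_1 a_3 b_2 ⋯ = 1`. It contains `Γ` as a retract, and the `b_l` freely generate a
subgroup meeting `Γ` trivially. -/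
theorem exists_base (p : ℕ) : ∃ (P : Type) (_ : Group P) (ι : Gamma (2 * (p + 2)) →* P)
    (β : FreeGroup (Fin (p + 2)) →* P), Function.Injective ι ∧
      ((List.finRange (p + 2)).map fun l : Fin (p + 2) =>
        ι (aΓ _ (2 * l)) * β (FreeGroup.of l)).prod = 1 ∧
      ∀ f u, β f = ι u → f = 1 := by
  let r : Coprod (Gamma (2 * (p + 2))) (FreeGroup (Fin (p + 2))) :=
    ((List.finRange (p + 2)).map fun l : Fin (p + 2) =>
        Coprod.inl (aΓ _ (2 * l)) * Coprod.inr (FreeGroup.of l)).prod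
  let N := Subgroup.normalClosure {r}
  let π := QuotientGroup.mk' N
  let ι := π.comp Coprod.inl
  let β := π.comp Coprod.inr
  have hπ : π r = 1 := (QuotientGroup.eq_one_iff r).2 (Subgroup.subset_normalClosure rfl)
  have univ : ∀ {Q : Type} [Group Q] (φ : Gamma (2 * (p + 2)) →* Q) (e : Fin (p + 2) → Q),
      ((List.finRange (p + 2)).map fun l : Fin (p + 2) => φ (aΓ _ (2 * l)) * e l).prod = 1 →
      ∃ Φ : (Coprod (Gamma (2 * (p + 2))) (FreeGroup (Fin (p + 2))) ⧸ N) →* Q,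
        (∀ u, Φ (ι u) = φ u) ∧ ∀ f, Φ (β f) = FreeGroup.lift e f := by
    intro Q _ φ e h
    have hN : N ≤ (Coprod.lift φ (FreeGroup.lift e)).ker := by
      refine Subgroup.normalClosure_le_normal ?_
      rintro _ rfl
      simp only [SetLike.mem_coe, MonoidHom.mem_ker, r, map_list_prod, List.map_map]
      simpa [Function.comp_def] using h
    exact ⟨QuotientGroup.lift N (Coprod.lift φ (FreeGroup.lift e)) hN, fun u => rfl, fun f => rfl⟩
  refine ⟨_, inferInstance, ι, β, ?_, ?_, ?_⟩
  · obtain ⟨Φ, h, -⟩ := univ (MonoidHom.id _)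
      (fun l : Fin (p + 2) => (aΓ (2 * (p + 2)) (2 * l))⁻¹) (by simp)
    exact Function.LeftInverse.injective (g := Φ) h
  · rw [map_list_prod, List.map_map] at hπ
    simpa only [Function.comp_def, map_mul] using! hπ
  · intro f u hfu
    apply eq_one_of_invariant p f
    intro e e' hee
    obtain ⟨φ, h0, -⟩ := exists_pairHom (p + 2) e 1
    obtain ⟨Φ, h1, h2⟩ := univ φ e (by simp [h0])
    obtain ⟨Φ', hι', hβ'⟩ := univ φ e' (by simpa [h0] using hee)
    rw [← h2, ← hβ', hfu, hι', h1]

/-! ### Positive words -/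

/-- `posWord j c u [u_1, …, u_n]` is the positive word `j u_n * c * ⋯ * j u_1 * c * j u`: the
coefficients are listed from right to left. -/
def posWord {G M : Type*} [Group G] [Monoid M] (j : G →* M) (c : M) : G → List G → M
  | u, [] => j u
  | u, v :: L => posWord j c v L * c * j u

theorem map_posWord {G M M' : Type*} [Group G] [Monoid M] [Monoid M'] (j : G →* M) (c : M)
    (φ : M →* M') (u : G) (L : List G) :
    φ (posWord j c u L) = posWord (φ.comp j) (φ c) u L := by
  induction L generalizing u with
  | nil => rfl
  | cons v L ih => simp [posWord, ih]

theorem posWord_congr {G M : Type*} [Group G] [Monoid M] {j j' : G →* M} (c : M) (u : G)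
    (L : List G) (h : ∀ v ∈ u :: L, j v = j' v) : posWord j c u L = posWord j' c u L := by
  induction L generalizing u with
  | nil => exact h u (by simp)
  | cons v L ih =>
    rw [posWord, posWord, ih v fun w hw => h w (List.mem_cons_of_mem _ hw), h u (by simp)]

theorem exists_posWord_mul {G M : Type*} [Group G] [Monoid M] (j : G →* M) (c : M)
    (u v : G) (L L' : List G) : ∃ w L'', posWord j c u L * posWord j c v L' = posWord j c w L'' := by
  induction L' generalizing v with
  | nil =>
    cases L with
    | nil => exact ⟨u * v, [], by simp [posWord]⟩
    | cons a L => exact ⟨u * v, a :: L, by simp [posWord, mul_assoc]⟩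
  | cons a L' ih =>
    obtain ⟨w, L'', h⟩ := ih a
    exact ⟨v, w :: L'', by simp only [posWord, ← h, mul_assoc]⟩

theorem exists_eq_posWord {G : Type*} [Group G] (W : Coprod G (Multiplicative ℕ)) :
    ∃ u L, W = posWord Coprod.inl (Coprod.inr (Multiplicative.ofAdd 1)) u L := by
  induction W using Coprod.induction_on with
  | inl g => exact ⟨g, [], rfl⟩
  | inr n =>
    induction n using Multiplicative.rec with | _ n =>
    induction n with
    | zero => exact ⟨1, [], by simp [posWord]⟩
    | succ n ih =>
      obtain ⟨u, L, h⟩ := ih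
      refine ⟨1, u :: L, ?_⟩
      rw [posWord, ← h, ofAdd_add, map_mul, map_one Coprod.inl, mul_one]
  | mul x y hx hy =>
    obtain ⟨u, L, rfl⟩ := hx
    obtain ⟨v, L', rfl⟩ := hy
    exact exists_posWord_mul _ _ _ _ _ _

/-- A positive word in the stable letter is reduced, and so is its inverse, which is the form
recorded here: its head is the inverse of the rightmost coefficient. -/
def invReducedWord {G P : Type*} [Group G] [Group P] (A B : Subgroup P) (ι : G →* P) (u : G)
    (L : List G) : HNNExtension.NormalWord.ReducedWord P A B where
  head := (ι u)⁻¹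
  toList := L.map fun v => (-1, (ι v)⁻¹)
  chain := by
    rw [List.isChain_map]
    induction L with
    | nil => simp
    | cons a L ih => cases L <;> simp_all

theorem invReducedWord_prod {G P : Type*} [Group G] [Group P] {A B : Subgroup P} (φ : A ≃* B)
    (ι : G →* P) (u : G) (L : List G) : (invReducedWord A B ι u L).prod φ =
      (posWord (HNNExtension.of.comp ι) (HNNExtension.t (φ := φ)) u L)⁻¹ := by
  induction L generalizing u with
  | nil => simp [posWord, invReducedWord, HNNExtension.NormalWord.ReducedWord.prod]
  | cons v L ih =>
    rw [posWord, mul_inv_rev, mul_inv_rev, ← ih]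
    simp [invReducedWord, HNNExtension.NormalWord.ReducedWord.prod, mul_assoc]

/-- If `G` meets the associated subgroup `A` trivially, positive words in the stable letter with
coefficients in `G` are determined by their value. This is Britton's lemma: the only possible
pinch in `W V⁻¹` is the one around the two rightmost coefficients. -/
theorem posWord_injective {G P : Type*} [Group G] [Group P] {A B : Subgroup P} (φ : A ≃* B)
    (ι : G →* P) (hι : Function.Injective ι) (hA : ∀ g, ι g ∈ A → g = 1) (u v : G) (L L' : List G)
    (h : posWord (HNNExtension.of.comp ι) (HNNExtension.t (φ := φ)) u L =
      posWord (HNNExtension.of.comp ι) (HNNExtension.t (φ := φ)) v L') : u = v ∧ L = L' := by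
  induction L generalizing u v L' with
  | nil =>
    have h1 := (HNNExtension.ReducedWord.map_fst_eq_and_of_prod_eq φ
      (w₁ := invReducedWord A B ι u []) (w₂ := invReducedWord A B ι v L')
      (by rw [invReducedWord_prod, invReducedWord_prod, h])).1
    cases L' with
    | nil => exact ⟨hι (HNNExtension.of_injective φ h), rfl⟩
    | cons b L' => simp [invReducedWord] at h1
  | cons a L ih =>
    have h1 := HNNExtension.ReducedWord.map_fst_eq_and_of_prod_eq φ
      (w₁ := invReducedWord A B ι u (a :: L)) (w₂ := invReducedWord A B ι v L')
      (by rw [invReducedWord_prod, invReducedWord_prod, h])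
    cases L' with
    | nil => simp [invReducedWord] at h1
    | cons b L' =>
      have h2 : u * v⁻¹ = 1 := hA _ (by simpa [invReducedWord] using h1.2 (-1))
      obtain rfl : u = v := mul_inv_eq_one.1 h2
      have h3 := ih a b L' (mul_right_cancel (mul_right_cancel h))
      exact ⟨rfl, by rw [h3.1, h3.2]⟩

/-! ### Distinct positive polynomials differ on almost all `x_i` -/

/-- If two positive polynomials agree at `x_i` for arbitrarily large `i`, they are equal. For each
`i` there is a homomorphism `Φ_i` from `Γ` to the HNN extension sending `x_i` to the stable letter
and every other generator to its copy in the base; for large `i` it maps all coefficients to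
their copies in the base, so uniqueness of positive words in the stable letter applies. -/
theorem exists_forall_ge_eval_ne (p : ℕ)
    (W V : Coprod (Gamma (2 * (p + 2))) (Multiplicative ℕ)) (hWV : W ≠ V) :
    ∃ N, ∀ i ≥ N, monoidEval (xΓ _ i) W ≠ monoidEval (xΓ _ i) V := by
  obtain ⟨P, _, ι, β, hι, hrel, htriv⟩ := exists_base p
  have hβ : Function.Injective β := (injective_iff_map_eq_one β).2 fun f hf =>
    htriv f 1 (by simpa using hf)
  let α : FreeGroup (Fin (p + 2)) →* P :=
    ι.comp (FreeGroup.lift fun l : Fin (p + 2) => aΓ (2 * (p + 2)) (2 * l + 1))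
  have hα : Function.Injective α := by
    refine hι.comp ?_
    obtain ⟨φ, -, h, -⟩ := exists_pairHom (p + 2) (FreeGroup.of (α := Fin (p + 2))) 1
    have : φ.comp (FreeGroup.lift fun l : Fin (p + 2) => aΓ (2 * (p + 2)) (2 * l + 1)) =
        MonoidHom.id _ := by
      ext l
      simp [h]
    exact Function.LeftInverse.injective (g := φ) fun f => DFunLike.congr_fun this f
  let θ : β.range ≃* α.range := (MonoidHom.ofInjective hβ).symm.trans (MonoidHom.ofInjective hα)
  have hθ : ∀ f, (HNNExtension.t (φ := θ)) * HNNExtension.of (β f) =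
      HNNExtension.of (α f) * HNNExtension.t := by
    intro f
    have h1 := HNNExtension.t_mul_of (φ := θ) (MonoidHom.ofInjective hβ f)
    have h2 : θ (MonoidHom.ofInjective hβ f) = MonoidHom.ofInjective hα f := by simp [θ]
    rw [h2] at h1
    exact h1
  have hΦ : ∀ i, ∃ Φ : Gamma (2 * (p + 2)) →* HNNExtension P β.range α.range θ,
      Φ (xΓ _ i) = HNNExtension.t ∧ (∀ j ≠ i, Φ (xΓ _ j) = HNNExtension.of (ι (xΓ _ j))) ∧
      ∀ j, Φ (PresentedGroup.of (Sum.inl j)) =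
        HNNExtension.of (ι (PresentedGroup.of (Sum.inl j))) := by
    intro i
    let f : Alphabet (2 * (p + 2)) → HNNExtension P β.range α.range θ := Sum.elim
      (fun j => HNNExtension.of (ι (PresentedGroup.of (Sum.inl j))))
      (fun j => if j = i then HNNExtension.t else HNNExtension.of (ι (xΓ _ j)))
    have hf : ∀ r ∈ rels (2 * (p + 2)), FreeGroup.lift f r = 1 := by
      rintro _ ⟨j, rfl⟩
      have hg : ∀ n, FreeGroup.lift f (gena (2 * (p + 2)) n) =
          HNNExtension.of (ι (aΓ (2 * (p + 2)) n)) := fun n => by simp [f, gena, aΓ]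
      rw [lift_relw]
      simp only [hg]
      by_cases hj : j = i
      · have h1 := congrArg (HNNExtension.of (φ := θ)) hrel
        rw [map_list_prod, List.map_map, map_one] at h1
        rw [← h1]
        congr 1
        refine List.map_congr_left fun l _ => ?_
        have h2 := hθ (FreeGroup.of l)
        have h3 : α (FreeGroup.of l) = ι (aΓ _ (2 * l + 1)) := by simp [α]
        rw [h3] at h2
        simp only [f, hj, Sum.elim_inr, if_true, Function.comp_apply, map_mul]
        rw [mul_assoc, ← h2]
        group
      · have h1 := congrArg (fun g => HNNExtension.of (φ := θ) (ι g)) (relw_eq_one (p + 2) j)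
        simpa [f, hj, map_list_prod, List.map_map, Function.comp_def] using h1
    refine ⟨PresentedGroup.toGroup hf, ?_, fun j hj => ?_, fun j => ?_⟩
    · exact (PresentedGroup.toGroup.of hf).trans (by simp [f])
    · exact (PresentedGroup.toGroup.of hf).trans (by simp [f, hj])
    · exact (PresentedGroup.toGroup.of hf).trans (by simp [f])
  choose Φ hx hy ha using hΦ
  have hfix : ∀ g, ∀ᶠ i in Filter.atTop, Φ i g = HNNExtension.of (ι g) := by
    intro g
    let S : Subgroup (Gamma (2 * (p + 2))) :=
      { carrier := {g | ∀ᶠ i in Filter.atTop, Φ i g = HNNExtension.of (ι g)}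
        one_mem' := by simp
        mul_mem' := fun h1 h2 => by
          filter_upwards [h1, h2] with i h1 h2
          simp [h1, h2]
        inv_mem' := fun h1 => by
          filter_upwards [h1] with i h1
          simp [h1] }
    refine PresentedGroup.generated_by _ S ?_ g
    rintro (j | j)
    · exact Filter.Eventually.of_forall fun i => ha i j
    · filter_upwards [Filter.eventually_gt_atTop j] with i hi
      exact hy i j hi.ne
  obtain ⟨u, L, rfl⟩ := exists_eq_posWord W
  obtain ⟨v, L', rfl⟩ := exists_eq_posWord V
  have hlist : ∀ K : List (Gamma (2 * (p + 2))),
      ∀ᶠ i in Filter.atTop, ∀ g ∈ K, Φ i g = HNNExtension.of (ι g) := by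
    intro K
    induction K with
    | nil => simp
    | cons a K ih =>
      filter_upwards [hfix a, ih] with i h1 h2
      simpa using ⟨h1, h2⟩
  obtain ⟨N, hN⟩ := Filter.eventually_atTop.1 ((hlist (u :: L)).and (hlist (v :: L')))
  refine ⟨N, fun i hi heq => hWV ?_⟩
  have hev : ∀ w K, (∀ g ∈ w :: K, Φ i g = HNNExtension.of (ι g)) →
      Φ i (monoidEval (xΓ _ i)
        (posWord Coprod.inl (Coprod.inr (Multiplicative.ofAdd 1)) w K)) =
      posWord (HNNExtension.of.comp ι) (HNNExtension.t (φ := θ)) w K := by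
    intro w K hK
    rw [map_posWord, map_posWord]
    have h1 : Φ i (monoidEval (xΓ _ i) (Coprod.inr (Multiplicative.ofAdd 1))) =
        HNNExtension.t := by simp [monoidEval, hx]
    rw [h1]
    exact posWord_congr _ _ _ fun g hg => by simpa [monoidEval] using hK g hg
  have h1 := congrArg (Φ i) heq
  rw [hev u L (hN i hi).1, hev v L' (hN i hi).2] at h1
  obtain ⟨rfl, rfl⟩ := posWord_injective θ ι hι
    (fun g ⟨f, hf⟩ => hι (by rw [← hf, htriv f g hf, map_one, map_one])) u v L L' h1
  rfl

/-! ### The topologies -/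

/-- `Zar⁺` is coarser than `Zar` on every group: `W(g) = V(g)` means `(W V⁻¹)(g) = 1`. -/
theorem zariskiGroup_le_zariskiSemigroup (G : Type*) [Group G] :
    zariskiGroup G ≤ zariskiSemigroup G := by
  refine le_generateFrom ?_
  rintro _ ⟨W, V, rfl⟩
  let ψ : Coprod G (Multiplicative ℕ) →* Coprod G (Multiplicative ℤ) :=
    Coprod.map (MonoidHom.id G) (powersHom _ (Multiplicative.ofAdd 1))
  have hψ : ∀ g, (groupEval g).comp ψ = monoidEval g := by
    intro g
    ext <;> simp [groupEval, monoidEval, ψ]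
  refine TopologicalSpace.isOpen_generateFrom_of_mem ⟨ψ W * (ψ V)⁻¹, ?_⟩
  ext g
  rw [Set.mem_ofPred_eq, Set.mem_ofPred_eq, map_mul, map_inv, ne_eq, ne_eq, mul_inv_eq_one, ← hψ]
  rfl

/-- `X` is dense in `Zar⁺(Γ)`; in fact the sequence `x_i` converges to every point. -/
theorem exists_xΓ_mem (p : ℕ) (s : Set (Gamma (2 * (p + 2))))
    (hs : (zariskiSemigroup (Gamma (2 * (p + 2)))).IsOpen s) (hne : s.Nonempty) :
    ∃ i, xΓ _ i ∈ s := by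
  obtain ⟨g, hg⟩ := hne
  let := zariskiSemigroup (Gamma (2 * (p + 2)))
  have ht : Filter.Tendsto (xΓ (2 * (p + 2))) Filter.atTop (nhds g) := by
    refine TopologicalSpace.tendsto_nhds_generateFrom_iff.2 ?_
    rintro _ ⟨W, V, rfl⟩ hWV
    exact Filter.eventually_atTop.2 (exists_forall_ge_eval_ne p W V (by rintro rfl; exact hWV rfl))
  exact (ht.eventually (IsOpen.mem_nhds hs hg)).exists

/-- For the group `Γ = ⟨B ∣ w_1, w_2, …⟩` (with `k ≥ 8` even), the semigroup Zariski topology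
is strictly coarser than the group Zariski topology; in particular the two topologies differ. -/
theorem zariskiSemigroup_strictly_coarser_on_Gamma (k : ℕ) (hk8 : 8 ≤ k) (hke : Even k) :
    (∀ s : Set (Gamma k),
        (zariskiSemigroup (Gamma k)).IsOpen s → (zariskiGroup (Gamma k)).IsOpen s) ∧
    (∃ s : Set (Gamma k),
        (zariskiGroup (Gamma k)).IsOpen s ∧ ¬ (zariskiSemigroup (Gamma k)).IsOpen s) ∧
    zariskiSemigroup (Gamma k) ≠ zariskiGroup (Gamma k) := by
  suffices h : ∃ s : Set (Gamma k),
      (zariskiGroup (Gamma k)).IsOpen s ∧ ¬ (zariskiSemigroup (Gamma k)).IsOpen s by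
    refine ⟨zariskiGroup_le_zariskiSemigroup (Gamma k), h, fun heq => ?_⟩
    obtain ⟨s, h1, h2⟩ := h
    exact h2 (heq ▸ h1)
  obtain ⟨p, rfl⟩ : ∃ p, k = 2 * (p + 2) := by
    obtain ⟨m, rfl⟩ := hke
    exact ⟨m - 2, by omega⟩
  let W : Coprod (Gamma (2 * (p + 2))) (Multiplicative ℤ) :=
    ((List.finRange (p + 2)).map fun l : Fin (p + 2) =>
      Coprod.inl (aΓ _ (2 * l)) * (Coprod.inr (Multiplicative.ofAdd 1))⁻¹ *
        Coprod.inl (aΓ _ (2 * l + 1)) * Coprod.inr (Multiplicative.ofAdd 1)).prod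
  have hW : ∀ g, groupEval g W = ((List.finRange (p + 2)).map fun l : Fin (p + 2) =>
      aΓ (2 * (p + 2)) (2 * l) * g⁻¹ * aΓ _ (2 * l + 1) * g).prod := by
    intro g
    simp only [W, map_list_prod, List.map_map]
    simp [groupEval, Function.comp_def]
  refine ⟨{g | groupEval g W ≠ 1}, TopologicalSpace.isOpen_generateFrom_of_mem ⟨W, rfl⟩,
    fun hopen => ?_⟩
  -- `W` does not vanish at `a_{k+1}`: its image under a suitable homomorphism is a commutator.
  have hne : groupEval (aΓ _ (2 * (p + 2))) W ≠ 1 := by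
    intro h
    rw [hW] at h
    obtain ⟨s, t, hst⟩ := exists_perm
    obtain ⟨φ, h0, h1, h2, -⟩ := exists_pairHom (p + 2)
      (Fin.cons s fun _ => 1 : Fin (p + 2) → Equiv.Perm ℚ) t
    have h3 := congrArg φ h
    simp only [map_list_prod, List.map_map, Function.comp_def, map_mul, map_inv, h0, h1, h2,
      map_one] at h3
    rw [List.finRange_succ, List.map_cons, List.map_map, List.prod_cons] at h3
    have h4 : s⁻¹ * t⁻¹ * s * t = 1 := by simpa [Function.comp_def] using h3
    have h5 : s * t = t * s := by
      calc s * t = t * s * (s⁻¹ * t⁻¹ * s * t) := by group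
        _ = t * s := by rw [h4, mul_one]
    simpa using hst 1 1 (by rw [h5])
  obtain ⟨i, hi⟩ := exists_xΓ_mem p _ hopen ⟨_, hne⟩
  exact hi ((hW _).trans (relw_eq_one (p + 2) i))
end

section
/- Let 𝒲 = {w_{i,j}^{±1}} be the symmetrized set consisting of all cyclic permutations of the words w_i and of their inverses. If U is a nonempty word that is a common initial segment of two distinct elements of 𝒲, then U has length exactly 1; consequently every piece with respect to 𝒲 has length 1, while every element of 𝒲 has length 2k, so the presentation ⟨B ∣ 𝒲⟩ satisfies the C'(λ) small cancellation condition for every λ > 1/(2k). -/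
section SmallCancellation

variable {β : Type*} [DecidableEq β]

/-- `U` is an initial segment of `W`: the reduced word of `U` is a prefix of that of `W`. -/
def IsInitialSegment (U W : FreeGroup β) : Prop := U.toWord <+: W.toWord

/-- `U` is a subword of `W`: the reduced word of `U` is an infix of that of `W`. -/
def IsSubword (U W : FreeGroup β) : Prop := U.toWord <:+: W.toWord

/-- The `j`-th cyclic permutation of (the reduced word of) `W`:
`b_1 ⋯ b_n ↦ b_{j+1} ⋯ b_n b_1 ⋯ b_j`. -/
def cyclicPerm (W : FreeGroup β) (j : ℕ) : FreeGroup β := FreeGroup.mk (W.toWord.rotate j)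

/-- A set `R ⊆ F(B)` is symmetrized if it is closed under inverses and cyclic permutations. -/
def Symmetrized (R : Set (FreeGroup β)) : Prop :=
  ∀ W ∈ R, W⁻¹ ∈ R ∧ ∀ j : ℕ, cyclicPerm W j ∈ R

/-- `U` is a piece with respect to `R`: `U` is nontrivial and is the maximal common initial
segment of two distinct elements of `R`. -/
def IsPiece (R : Set (FreeGroup β)) (U : FreeGroup β) : Prop :=
  U ≠ 1 ∧ ∃ W₁ ∈ R, ∃ W₂ ∈ R, W₁ ≠ W₂ ∧
    IsInitialSegment U W₁ ∧ IsInitialSegment U W₂ ∧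
    ∀ U' : FreeGroup β, IsInitialSegment U' W₁ → IsInitialSegment U' W₂ →
      U'.toWord.length ≤ U.toWord.length

/-- The presentation `⟨B ∣ R⟩` satisfies the `C'(λ)` small cancellation condition: every
piece `U` with respect to `R` occurring as a subword of some `W ∈ R` satisfies
`|U| < λ |W|`. -/
def SmallCancellation (R : Set (FreeGroup β)) (lam : ℝ) : Prop :=
  ∀ U W : FreeGroup β, IsPiece R U → W ∈ R → IsSubword U W →
    (U.toWord.length : ℝ) < lam * W.toWord.length

end SmallCancellation

/-- The symmetrized set `𝒲 = {w_{i,j}^{±1}}` of all cyclic permutations of the relators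
`w_i` and of their inverses. -/
def symmW (k : ℕ) : Set (FreeGroup (Alphabet k)) :=
  {W | ∃ i j : ℕ, W = cyclicPerm (relw k i) j ∨ W = cyclicPerm (relw k i)⁻¹ j}

/-- The letter of `w_i` at position `p` (counted from `0`): `a_{p/2+1}` for even `p`, and
`x_i^{-1}` or `x_i` for `p ≡ 1` or `p ≡ 3` mod `4`. -/
def relLetter (k i p : ℕ) : Alphabet k × Bool :=
  if p % 2 = 0 then (Sum.inl ⟨(p / 2) % (k + 1), Nat.mod_lt _ (Nat.succ_pos k)⟩, true)
  else (Sum.inr i, decide (p % 4 = 3))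

/-- The letter at position `p < 2k` of `w_i` (for `s = true`) or of `w_i⁻¹` (for `s = false`). -/
def signedLetter (k : ℕ) (s : Bool) (i p : ℕ) : Alphabet k × Bool :=
  if s then relLetter k i p
  else ((relLetter k i (2 * k - 1 - p)).1, !(relLetter k i (2 * k - 1 - p)).2)

/-- The cyclic permutation by `m` of the word of `w_i^{±1}`, the sign being given by `s`. -/
def cyclicWord (k : ℕ) (s : Bool) (i m : ℕ) : List (Alphabet k × Bool) :=
  (List.range (2 * k)).map (fun p => signedLetter k s i ((p + m) % (2 * k)))

/-- Letters `a` sit at the even positions of `w_i` and at the odd positions of `w_i⁻¹`. -/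
lemma signedLetter_isLeft (k : ℕ) (s : Bool) (i p : ℕ) (hp : p < 2 * k) :
    (signedLetter k s i p).1.isLeft = decide ((p % 2 = 0) ↔ s = true) := by
  cases s
  · by_cases h : p % 2 = 0
    · have h2 : ¬ (2 * k - 1 - p) % 2 = 0 := by omega
      simp [signedLetter, relLetter, h, h2]
    · have h2 : (2 * k - 1 - p) % 2 = 0 := by omega
      simp [signedLetter, relLetter, h, h2]
  · by_cases h : p % 2 = 0 <;> simp [signedLetter, relLetter, h]

lemma relw_eq_mk_aux (k i n : ℕ) :
    ((List.range n).map
      (fun l => gena k (2 * l) * (genx k i)⁻¹ * gena k (2 * l + 1) * genx k i)).prod =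
    FreeGroup.mk ((List.range (4 * n)).map (relLetter k i)) := by
  induction n with
  | zero => simp [FreeGroup.one_eq_mk]
  | succ n ih =>
    rw [List.range_succ, List.map_append, List.prod_append, ih,
      show 4 * (n + 1) = 4 * n + 1 + 1 + 1 + 1 by ring]
    simp only [List.range_succ, List.map_append, ← FreeGroup.mul_mk, List.map_cons, List.map_nil,
      List.prod_cons, List.prod_nil, mul_one, mul_assoc]
    congr 1
    have h0 : relLetter k i (4 * n) =
        (Sum.inl ⟨(2 * n) % (k + 1), Nat.mod_lt _ (Nat.succ_pos k)⟩, true) := by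
      have h1 : (4 * n) % 2 = 0 := by omega
      have h2 : 4 * n / 2 = 2 * n := by omega
      simp [relLetter, h1, h2]
    have h1 : relLetter k i (4 * n + 1) = (Sum.inr i, false) := by
      have h1 : (4 * n + 1) % 2 ≠ 0 := by omega
      have h2 : (4 * n + 1) % 4 ≠ 3 := by omega
      simp only [relLetter, h1, h2, if_false, decide_false]
    have h2 : relLetter k i (4 * n + 1 + 1) =
        (Sum.inl ⟨(2 * n + 1) % (k + 1), Nat.mod_lt _ (Nat.succ_pos k)⟩, true) := by
      have h1 : (4 * n + 1 + 1) % 2 = 0 := by omega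
      have h2 : (4 * n + 1 + 1) / 2 = 2 * n + 1 := by omega
      simp only [relLetter, h1, h2, if_true]
    have h3 : relLetter k i (4 * n + 1 + 1 + 1) = (Sum.inr i, true) := by
      have h1 : (4 * n + 1 + 1 + 1) % 2 ≠ 0 := by omega
      have h2 : (4 * n + 1 + 1 + 1) % 4 = 3 := by omega
      simp only [relLetter, h1, h2, if_false, decide_true]
    rw [h0, h1, h2, h3]
    rfl

lemma cyclicWord_length (k : ℕ) (s : Bool) (i m : ℕ) : (cyclicWord k s i m).length = 2 * k := by
  simp [cyclicWord]

/-- Adjacent letters have different underlying generators, as one is an `a` and the other an `x`. -/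
lemma cyclicWord_isReduced (k : ℕ) (s : Bool) (i m : ℕ) :
    FreeGroup.IsReduced (cyclicWord k s i m) := by
  rw [FreeGroup.IsReduced, List.isChain_iff_getElem]
  intro p hp h
  rw [cyclicWord_length] at hp
  exfalso
  have hk : 0 < 2 * k := by omega
  simp only [cyclicWord, List.getElem_map, List.getElem_range] at h
  have h' := congrArg Sum.isLeft h
  rw [signedLetter_isLeft _ _ _ _ (Nat.mod_lt _ hk),
    signedLetter_isLeft _ _ _ _ (Nat.mod_lt _ hk), decide_eq_decide,
    Nat.mod_mul_right_mod, Nat.mod_mul_right_mod] at h'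
  have h3 : (p + 1 + m) % 2 = 0 ↔ ¬ (p + m) % 2 = 0 := by omega
  rw [h3] at h'
  tauto

lemma cyclicWord_true_zero (k i : ℕ) :
    cyclicWord k true i 0 = (List.range (2 * k)).map (relLetter k i) := by
  apply List.map_congr_left
  intro p hp
  rw [List.mem_range] at hp
  simp [signedLetter, Nat.mod_eq_of_lt hp]

lemma invRev_cyclicWord_zero (k i : ℕ) :
    FreeGroup.invRev (cyclicWord k true i 0) = cyclicWord k false i 0 := by
  apply List.ext_getElem
  · simp [cyclicWord_length]
  · intro p h1 h2
    rw [cyclicWord_length] at h2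
    have h3 : 2 * k - 1 - p < 2 * k := by omega
    simp [FreeGroup.invRev, cyclicWord, signedLetter, Nat.mod_eq_of_lt h2, Nat.mod_eq_of_lt h3]

lemma rotate_cyclicWord (k : ℕ) (s : Bool) (i j : ℕ) :
    (cyclicWord k s i 0).rotate j = cyclicWord k s i (j % (2 * k)) := by
  apply List.ext_getElem
  · simp [cyclicWord_length]
  · intro p h1 h2
    simp [cyclicWord, List.getElem_rotate]

lemma toWord_relw (k i : ℕ) (hke : Even k) : (relw k i).toWord = cyclicWord k true i 0 := by
  obtain ⟨n, rfl⟩ := hke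
  have h := relw_eq_mk_aux (n + n) i n
  rw [show 4 * n = 2 * (n + n) by ring, ← cyclicWord_true_zero] at h
  rw [relw, show (n + n) / 2 = n by omega, h, FreeGroup.toWord_mk,
    (cyclicWord_isReduced _ _ _ _).reduce_eq]

lemma toWord_of_mem_symmW (k : ℕ) (hk : 0 < k) (hke : Even k) {W : FreeGroup (Alphabet k)}
    (hW : W ∈ symmW k) : ∃ s i m, m < 2 * k ∧ W.toWord = cyclicWord k s i m := by
  obtain ⟨i, j, rfl | rfl⟩ := hW
  · refine ⟨true, i, j % (2 * k), Nat.mod_lt _ (by omega), ?_⟩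
    rw [cyclicPerm, toWord_relw k i hke, rotate_cyclicWord, FreeGroup.toWord_mk,
      (cyclicWord_isReduced _ _ _ _).reduce_eq]
  · refine ⟨false, i, j % (2 * k), Nat.mod_lt _ (by omega), ?_⟩
    rw [cyclicPerm, FreeGroup.toWord_inv, toWord_relw k i hke, invRev_cyclicWord_zero,
      rotate_cyclicWord, FreeGroup.toWord_mk, (cyclicWord_isReduced _ _ _ _).reduce_eq]

/-- An `a`-letter determines the sign and the position at which it is read. -/
lemma signedLetter_inj_of_isLeft {k : ℕ} {s s' : Bool} {i i' p p' : ℕ} (hp : p < 2 * k)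
    (hp' : p' < 2 * k) (hl : (signedLetter k s i p).1.isLeft = true)
    (h : signedLetter k s i p = signedLetter k s' i' p') : s = s' ∧ p = p' := by
  have hl' := hl
  rw [h] at hl'
  rw [signedLetter_isLeft _ _ _ _ hp, decide_eq_true_iff] at hl
  rw [signedLetter_isLeft _ _ _ _ hp', decide_eq_true_iff] at hl'
  have key : ∀ q q' : ℕ, q < 2 * k → q' < 2 * k → q % 2 = 0 → q' % 2 = 0 →
      q / 2 % (k + 1) = q' / 2 % (k + 1) → q = q' := by
    intro q q' h1 h2 h3 h4 h5
    rw [Nat.mod_eq_of_lt (by omega), Nat.mod_eq_of_lt (by omega)] at h5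
    omega
  cases s <;> cases s'
  · have e : (2 * k - 1 - p) % 2 = 0 := by simp at hl; omega
    have e' : (2 * k - 1 - p') % 2 = 0 := by simp at hl'; omega
    simp [signedLetter, relLetter, e, e'] at h
    have := key _ _ (by omega) (by omega) e e' h
    exact ⟨rfl, by omega⟩
  · have e : (2 * k - 1 - p) % 2 = 0 := by simp at hl; omega
    have e' : p' % 2 = 0 := by simpa using hl'
    simp [signedLetter, relLetter, e, e'] at h
  · have e : p % 2 = 0 := by simpa using hl
    have e' : (2 * k - 1 - p') % 2 = 0 := by simp at hl'; omega
    simp [signedLetter, relLetter, e, e'] at h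
  · have e : p % 2 = 0 := by simpa using hl
    have e' : p' % 2 = 0 := by simpa using hl'
    simp [signedLetter, relLetter, e, e'] at h
    exact ⟨rfl, key _ _ hp hp' e e' h⟩

/-- An `x`-letter determines the index of the relator it is read from. -/
lemma signedLetter_inj_of_isRight {k : ℕ} {s s' : Bool} {i i' p p' : ℕ}
    (hl : (signedLetter k s i p).1.isLeft = false)
    (h : signedLetter k s i p = signedLetter k s' i' p') : i = i' := by
  have hl' := hl
  rw [h] at hl'
  have h1 := congrArg Prod.fst h
  have key : ∀ t j q, (signedLetter k t j q).1.isLeft = false →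
      (signedLetter k t j q).1 = Sum.inr j := by
    intro t j q hq
    cases t <;> simp only [signedLetter, relLetter] at hq ⊢ <;> split_ifs at hq ⊢ <;> simp_all
  rw [key _ _ _ hl, key _ _ _ hl'] at h1
  exact Sum.inr.inj h1

/-- Two cyclically consecutive letters determine the sign, the relator and the position. -/
lemma cyclicLetter_inj {k : ℕ} {s s' : Bool} {i i' m m' : ℕ} (hm : m < 2 * k)
    (hm' : m' < 2 * k) (h0 : signedLetter k s i m = signedLetter k s' i' m')
    (h1 : signedLetter k s i ((1 + m) % (2 * k)) = signedLetter k s' i' ((1 + m') % (2 * k))) :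
    s = s' ∧ i = i' ∧ m = m' := by
  have hk : 0 < 2 * k := by omega
  have l0 := signedLetter_isLeft k s i m hm
  have l1 := signedLetter_isLeft k s i ((1 + m) % (2 * k)) (Nat.mod_lt _ hk)
  rw [Nat.mod_mul_right_mod] at l1
  have h3 : (1 + m) % 2 = 0 ↔ ¬ m % 2 = 0 := by omega
  by_cases hc : m % 2 = 0 ↔ s = true
  · rw [decide_eq_true hc] at l0
    rw [decide_eq_false (by tauto)] at l1
    obtain ⟨hs, hmm⟩ := signedLetter_inj_of_isLeft hm hm' l0 h0
    exact ⟨hs, signedLetter_inj_of_isRight l1 h1, hmm⟩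
  · rw [decide_eq_false hc] at l0
    rw [decide_eq_true (by tauto)] at l1
    obtain ⟨hs, hmm⟩ :=
      signedLetter_inj_of_isLeft (Nat.mod_lt _ hk) (Nat.mod_lt _ hk) l1 h1
    refine ⟨hs, signedLetter_inj_of_isRight l0 h0, ?_⟩
    have h4 : m ≡ m' [MOD 2 * k] := Nat.ModEq.add_left_cancel' 1 hmm
    exact h4.eq_of_lt_of_lt hm hm'

lemma common_initial_length (k : ℕ) (hk : 0 < k) (hke : Even k) (U W₁ W₂ : FreeGroup (Alphabet k))
    (h₁ : W₁ ∈ symmW k) (h₂ : W₂ ∈ symmW k) (hne : W₁ ≠ W₂) (hU : U ≠ 1)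
    (i₁ : IsInitialSegment U W₁) (i₂ : IsInitialSegment U W₂) : U.toWord.length = 1 := by
  obtain ⟨s, i, m, hm, e₁⟩ := toWord_of_mem_symmW k hk hke h₁
  obtain ⟨s', i', m', hm', e₂⟩ := toWord_of_mem_symmW k hk hke h₂
  have hpos : U.toWord.length ≠ 0 := by
    rwa [Ne, List.length_eq_zero_iff, FreeGroup.toWord_eq_nil_iff]
  by_contra hlen
  apply hne
  apply FreeGroup.toWord_injective
  rw [IsInitialSegment, e₁] at i₁
  rw [IsInitialSegment, e₂] at i₂
  have a0 := (i₁.getElem (i := 0) (by omega)).symm.trans (i₂.getElem (i := 0) (by omega))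
  have a1 := (i₁.getElem (i := 1) (by omega)).symm.trans (i₂.getElem (i := 1) (by omega))
  simp only [cyclicWord, List.getElem_map, List.getElem_range, zero_add, Nat.mod_eq_of_lt hm,
    Nat.mod_eq_of_lt hm'] at a0 a1
  obtain ⟨rfl, rfl, rfl⟩ := cyclicLetter_inj hm hm' a0 a1
  rw [e₁, e₂]

/-- Any nonempty common initial segment of two distinct elements of `𝒲` has length exactly
`1`; every element of `𝒲` has length `2k`; consequently the presentation `⟨B ∣ 𝒲⟩` satisfies
the `C'(λ)` small cancellation condition for every `λ > 1/(2k)`. -/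
theorem symmW_small_cancellation (k : ℕ) (hk8 : 8 ≤ k) (hke : Even k) :
    (∀ U W₁ W₂ : FreeGroup (Alphabet k), W₁ ∈ symmW k → W₂ ∈ symmW k → W₁ ≠ W₂ →
      U ≠ 1 → IsInitialSegment U W₁ → IsInitialSegment U W₂ → U.toWord.length = 1) ∧
    (∀ W ∈ symmW k, W.toWord.length = 2 * k) ∧
    (∀ lam : ℝ, 1 / (2 * k : ℝ) < lam → SmallCancellation (symmW k) lam) := by
  have hk : 0 < k := by omega
  have hlen : ∀ W ∈ symmW k, W.toWord.length = 2 * k := by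
    intro W hW
    obtain ⟨s, i, m, -, e⟩ := toWord_of_mem_symmW k hk hke hW
    rw [e, cyclicWord_length]
  refine ⟨fun U W₁ W₂ => common_initial_length k hk hke U W₁ W₂, hlen, ?_⟩
  rintro lam hlam U W ⟨hU, W₁, h₁, W₂, h₂, hne, i₁, i₂, -⟩ hW -
  rw [common_initial_length k hk hke U W₁ W₂ h₁ h₂ hne hU i₁ i₂, hlen W hW]
  have hk' : (0 : ℝ) < 2 * k := by positivity
  rw [div_lt_iff₀ hk'] at hlam
  push_cast
  exact hlam
end

section
/- The set X = {x_1, x_2, …} of images in Γ of the generators x_i is dense in Γ with respect to the semigroup Zariski topology Zar⁺(Γ). -/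
open Monoid (Coprod)

namespace ZariskiDense

/-! ### Words with positive exponents in an HNN extension -/

section HNN

variable {G K : Type*} [Group G] [Group K] {A B : Subgroup K} (φ : A ≃* B)

/-- A word `g t l₁ t l₂ ⋯ t lₙ` is reduced, whatever the coefficients are. -/
def posWord (A B : Subgroup K) (g : K) (L : List K) : HNNExtension.NormalWord.ReducedWord K A B where
  head := g
  toList := L.map fun l => (1, l)
  chain := by
    rw [List.isChain_map]
    induction L with
    | nil => simp
    | cons a L ih => cases L <;> simp_all

theorem posWord_prod (g : K) (L : List K) :
    (posWord A B g L).prod φ =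
      HNNExtension.of g * (L.map fun l => HNNExtension.t * HNNExtension.of l).prod := by
  simp [HNNExtension.NormalWord.ReducedWord.prod, posWord, Function.comp_def]

/-- Britton's lemma for words with positive exponents. -/
theorem britton_pos {g h : K} {L M : List K}
    (e : (posWord A B g L).prod φ = (posWord A B h M).prod φ) :
    L.length = M.length ∧ (L ≠ [] → g⁻¹ * h ∈ B) := by
  obtain ⟨h1, h2⟩ := HNNExtension.ReducedWord.map_fst_eq_and_of_prod_eq φ e
  refine ⟨by simpa [posWord] using congrArg List.length h1, fun hL => ?_⟩
  cases L with
  | nil => exact absurd rfl hL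
  | cons a L => simpa [posWord] using h2 1 (by simp [posWord])

/-- If `B` lies in the image of `G` and `A` meets that image trivially, a word with positive
exponents and coefficients in `G` is determined by its value in the HNN extension. -/
theorem word_injective (ι : G →* K) (hι : Function.Injective ι)
    (hB : ∀ b ∈ B, b ∈ ι.range) (hA : ∀ c ∈ A, c ∈ ι.range → c = 1) (L : List G) :
    ∀ (M : List G) (g h : G),
      (posWord A B (ι g) (L.map ι)).prod φ = (posWord A B (ι h) (M.map ι)).prod φ →
      g = h ∧ L = M := by
  induction L with
  | nil =>
    intro M g h e
    have hl := (britton_pos φ e).1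
    obtain rfl : M = [] := by simpa using hl.symm
    refine ⟨hι (HNNExtension.of_injective (φ := φ) ?_), rfl⟩
    simpa [posWord_prod] using e
  | cons l L ih =>
    intro M g h e
    obtain ⟨hlen, hmem⟩ := britton_pos φ e
    cases M with
    | nil => simp at hlen
    | cons l' M =>
      have hb := hmem (by simp)
      set c : A := φ.symm ⟨_, hb⟩ with hc
      have hφ : ((φ c : B) : K) = (ι g)⁻¹ * ι h := by simp [hc]
      have e' : (posWord A B (ι l) (L.map ι)).prod φ
          = (posWord A B (c * ι l') (M.map ι)).prod φ := by
        have ht := HNNExtension.t_mul_of (φ := φ) c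
        rw [hφ] at ht
        simp only [posWord_prod, List.map_cons, List.prod_cons, map_mul, map_inv] at e ht ⊢
        rw [← mul_right_inj HNNExtension.t, ← mul_right_inj (HNNExtension.of (ι g))]
        rw [mul_assoc] at e
        rw [e, ← mul_assoc HNNExtension.t, ← mul_assoc HNNExtension.t, ht]
        group
      have hcS : (c : K) ∈ ι.range := by
        obtain ⟨hlen', hmem'⟩ := britton_pos φ e'
        have key : (ι l)⁻¹ * (c * ι l') ∈ ι.range := by
          by_cases hL : L.map ι = []
          · have hM : M.map ι = [] := by
              rw [hL] at hlen'; exact List.length_eq_zero_iff.1 hlen'.symm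
            rw [hL, hM] at e'
            have : ι l = c * ι l' := HNNExtension.of_injective (φ := φ)
              (by simpa [posWord_prod] using e')
            rw [← this]; simp
          · exact hB _ (hmem' hL)
        have := ι.range.mul_mem (ι.range.mul_mem ⟨l, rfl⟩ key) (ι.range.inv_mem ⟨l', rfl⟩)
        simpa [mul_assoc] using this
      have hc1 := hA _ c.2 hcS
      have hc1' : c = 1 := Subtype.ext hc1
      rw [hc1, one_mul] at e'
      obtain ⟨r1, r2⟩ := ih M l l' e'
      refine ⟨hι ?_, by rw [r1, r2]⟩
      rw [hc1', map_one] at hφ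
      exact inv_mul_eq_one.1 hφ.symm

end HNN

/-- Every element of `G[x]⁺` can be written `g x l₁ x l₂ ⋯ x lₙ`. -/
theorem coprod_exists_word {G : Type*} [Monoid G] (W : Coprod G (Multiplicative ℕ)) :
    ∃ (g : G) (L : List G), W = Coprod.inl g *
      (L.map fun l => Coprod.inr (Multiplicative.ofAdd 1) * Coprod.inl l).prod := by
  induction W using Coprod.induction_on' with
  | one => exact ⟨1, [], by simp⟩
  | inl_mul g W ih =>
    obtain ⟨g', L, rfl⟩ := ih
    exact ⟨g * g', L, by simp [mul_assoc]⟩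
  | inr_mul n W ih =>
    obtain ⟨N, rfl⟩ := Multiplicative.ofAdd.surjective n
    induction N with
    | zero => simpa using ih
    | succ N ihN =>
      obtain ⟨g', L, hL⟩ := ihN
      refine ⟨1, g' :: L, ?_⟩
      rw [add_comm, ofAdd_add, map_mul, mul_assoc, hL]
      simp [mul_assoc]

/-! ### Homomorphisms out of `Γ` -/

section Gamma

variable {k : ℕ} {P : Type*} [Group P]

/-- The value of the relator `a_1 x⁻¹ a_2 x ⋯ a_{k-1} x⁻¹ a_k x` at `a_{j+1} = α j`, `x = ξ`. -/
def relVal (k : ℕ) (α : ℕ → P) (ξ : P) : P :=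
  ((List.range (k / 2)).map fun l => α (2 * l) * ξ⁻¹ * α (2 * l + 1) * ξ).prod

theorem map_relVal {Q : Type*} [Group Q] (f : P →* Q) (α : ℕ → P) (ξ : P) :
    f (relVal k α ξ) = relVal k (fun j => f (α j)) (f ξ) := by
  simp [relVal, map_list_prod, Function.comp_def]

theorem relVal_congr {α β : ℕ → P} {ξ : P} (h : ∀ j < k, α j = β j) :
    relVal k α ξ = relVal k β ξ := by
  unfold relVal
  congr 1
  refine List.map_congr_left fun l hl => ?_
  rw [List.mem_range] at hl
  rw [h _ (by omega), h _ (by omega)]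

theorem relVal_gamma (i : ℕ) : relVal k (aΓ k) (xΓ k i) = 1 := by
  have h : PresentedGroup.mk (rels k) (relw k i) = 1 :=
    PresentedGroup.one_of_mem ⟨i, rfl⟩
  have h2 : relw k i = relVal k (gena k) (genx k i) := rfl
  rw [h2, map_relVal] at h
  exact h

/-- The homomorphism `Γ → P` with `a_{j+1} ↦ α j` for `j ≤ k` and `x_i ↦ ξ i`. -/
def gammaLift (α : ℕ → P) (ξ : ℕ → P) (h : ∀ i, relVal k α (ξ i) = 1) : Gamma k →* P :=
  PresentedGroup.toGroup (f := Sum.elim (fun j : Fin (k + 1) => α j) ξ) (by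
    rintro _ ⟨i, rfl⟩
    have h2 : relw k i = relVal k (gena k) (genx k i) := rfl
    rw [h2, map_relVal, ← h i]
    simp only [genx, FreeGroup.lift_apply_of, Sum.elim_inr]
    refine relVal_congr fun j hj => ?_
    simp [gena, Nat.mod_eq_of_lt (show j < k + 1 by omega)])

theorem gammaLift_a (α : ℕ → P) (ξ : ℕ → P) (h : ∀ i, relVal k α (ξ i) = 1) {j : ℕ} (hj : j ≤ k) :
    gammaLift α ξ h (aΓ k j) = α j := by
  simp [gammaLift, aΓ, Nat.mod_eq_of_lt (show j < k + 1 by omega)]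

theorem gammaLift_x (α : ℕ → P) (ξ : ℕ → P) (h : ∀ i, relVal k α (ξ i) = 1) (i : ℕ) :
    gammaLift α ξ h (xΓ k i) = ξ i := by
  simp [gammaLift, xΓ]

theorem gamma_induction {p : Gamma k → Prop} (g : Gamma k) (ha : ∀ j ≤ k, p (aΓ k j))
    (hx : ∀ i, p (xΓ k i)) (one : p 1) (mul : ∀ g h, p g → p h → p (g * h))
    (inv : ∀ g, p g → p g⁻¹) : p g := by
  have hg : g ∈ Subgroup.closure (Set.range (PresentedGroup.of (rels := rels k))) := by
    rw [PresentedGroup.closure_range_of]; trivial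
  induction hg using Subgroup.closure_induction with
  | mem y hy =>
    obtain ⟨b, rfl⟩ := hy
    cases b with
    | inl j =>
      have := ha j (by omega)
      simpa [aΓ, Nat.mod_eq_of_lt j.2] using this
    | inr i => exact hx i
  | one => exact one
  | mul _ _ _ _ h1 h2 => exact mul _ _ h1 h2
  | inv _ _ h1 => exact inv _ h1

theorem relVal_cyc (k j : ℕ) (d : P) :
    relVal k (fun i => if i = 2 * j then d else if i = 2 * j + 1 then d⁻¹ else 1) 1 = 1 := by
  refine List.prod_eq_one fun y hy => ?_
  obtain ⟨l, -, rfl⟩ := List.mem_map.1 hy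
  by_cases h : l = j
  · subst h; simp
  · have h2 : ¬ (2 * l = 2 * j + 1) := by omega
    have h3 : ¬ (2 * l + 1 = 2 * j) := by omega
    simp [h, h2, h3]

/-- The homomorphism `Γ → P` sending `a_{2j+1}` to `d`, `a_{2j+2}` to `d⁻¹` and all other generators
to `1`. -/
def cyc (k j : ℕ) (d : P) : Gamma k →* P :=
  gammaLift (fun i => if i = 2 * j then d else if i = 2 * j + 1 then d⁻¹ else 1) (fun _ => 1)
    fun _ => relVal_cyc k j d

theorem cyc_a {j i : ℕ} (d : P) (hi : i ≤ k) :
    cyc k j d (aΓ k i) = if i = 2 * j then d else if i = 2 * j + 1 then d⁻¹ else 1 :=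
  gammaLift_a _ _ _ hi

theorem cyc_mem (j : ℕ) (d : P) (g : Gamma k) : cyc k j d g ∈ Subgroup.zpowers d := by
  refine gamma_induction (p := fun g => cyc k j d g ∈ Subgroup.zpowers d) g ?_ ?_ ?_ ?_ ?_
  · intro i hi
    rw [cyc_a d hi]
    split_ifs <;> simp
  · intro i
    rw [cyc, gammaLift_x]
    exact one_mem _
  · simp
  · intro g h hg hh
    rw [map_mul]; exact mul_mem hg hh
  · intro g hg
    rw [map_inv]; exact inv_mem hg

end Gamma

/-! ### The group `K` and the elements `γ_l` -/

section Base

variable (n : ℕ)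

/-- The free group `F` on `m = n + 2` letters. -/
abbrev F := FreeGroup (Fin (n + 2))

/-- The free generators of `F`, indexed by `ℕ` (with junk value `1` outside the range). -/
def cgen (l : ℕ) : F n := if h : l < n + 2 then FreeGroup.of ⟨l, h⟩ else 1

theorem cgen_val (l : Fin (n + 2)) : cgen n l = FreeGroup.of l := by
  simp [cgen]

/-- The length `k = 2m` with `m = n + 2`. -/
abbrev kk := 2 * (n + 2)

/-- The free product `K = Γ * F`. -/
abbrev K := Coprod (Gamma (kk n)) (F n)

/-- The product `c_2 c_3 ⋯ c_m` of all the free generators but the first. -/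
def ctail : F n := ((List.range (n + 1)).map fun l => cgen n (l + 1)).prod

/-- The elements `γ_l` of `K`: all but the first are free generators, and the first is determined
by `a_1 γ_1 a_3 γ_2 ⋯ a_{k-1} γ_m = 1`. -/
def gam : ℕ → K n
  | 0 => (Coprod.inl (aΓ (kk n) 0))⁻¹ *
      (((List.range (n + 1)).map fun l =>
        Coprod.inl (aΓ (kk n) (2 * (l + 1))) * Coprod.inr (cgen n (l + 1))).prod)⁻¹
  | l + 1 => Coprod.inr (cgen n (l + 1))

theorem gam_rel : ((List.range (n + 2)).map fun l =>
    (Coprod.inl (aΓ (kk n) (2 * l)) : K n) * gam n l).prod = 1 := by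
  rw [List.prod_range_succ']
  simp [gam]

/-- The homomorphism `F → K` sending the generators to the elements `γ_l`. -/
def gamHom : F n →* K n := FreeGroup.lift fun l => gam n l

/-- The homomorphism `F → Γ` sending the generators to `a_2, a_4, …, a_k`. -/
def evenHom : F n →* Gamma (kk n) := FreeGroup.lift fun l => aΓ (kk n) (2 * l + 1)

/-- `a_2, a_4, …, a_k` freely generate a subgroup of `Γ`: setting all `x_i` and `a_3, a_5, …` equal
to `1` lets `a_2, a_4, …` be arbitrary, as `a_1` makes up for them. -/
theorem evenHom_injective : Function.Injective (evenHom n) := by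
  let α : ℕ → F n := fun j => if j = 0 then (((List.range (n + 2)).map (cgen n)).prod)⁻¹
    else if j % 2 = 1 then cgen n (j / 2) else 1
  have hα : ∀ l, α (2 * l + 1) = cgen n l := by
    intro l
    have h1 : (2 * l + 1) % 2 = 1 := by omega
    have h2 : (2 * l + 1) / 2 = l := by omega
    simp [α, h2]
  have hα' : ∀ l, α (2 * (l + 1)) = 1 := by
    intro l
    simp [α]
  have h : ∀ i : ℕ, relVal (kk n) α ((fun _ => 1 : ℕ → F n) i) = 1 := by
    intro _
    have hk : kk n / 2 = n + 2 := by simp [kk]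
    rw [relVal, hk, List.prod_range_succ']
    simp only [hα', hα]
    have h0 : α (2 * 0) = (((List.range (n + 2)).map (cgen n)).prod)⁻¹ := by simp [α]
    rw [h0, List.prod_range_succ' (cgen n)]
    simp
  let r := gammaLift α (fun _ => 1) h
  have hr : r.comp (evenHom n) = MonoidHom.id _ := by
    ext l
    simp only [evenHom, MonoidHom.comp_apply, FreeGroup.lift_apply_of, MonoidHom.id_apply]
    rw [gammaLift_a _ _ _ (by have := l.2; simp only [kk]; omega), hα, cgen_val]
  exact Function.LeftInverse.injective (g := r) fun u => DFunLike.congr_fun hr u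

/-- A homomorphism `K → F` which is the identity on `F ≤ K` and maps `γ_1` to `c_1` is a left
inverse of `gamHom`. -/
theorem retract (r : Gamma (kk n) →* F n)
    (h : Coprod.lift r (MonoidHom.id (F n)) (gam n 0) = cgen n 0) (u : F n) :
    Coprod.lift r (MonoidHom.id (F n)) (gamHom n u) = u := by
  have : (Coprod.lift r (MonoidHom.id (F n))).comp (gamHom n) = MonoidHom.id _ := by
    ext l
    simp only [gamHom, MonoidHom.comp_apply, FreeGroup.lift_apply_of, MonoidHom.id_apply]
    rw [← cgen_val]
    obtain ⟨l, hl⟩ := l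
    cases l with
    | zero => exact h
    | succ l => simp [gam]
  exact DFunLike.congr_fun this u

/-- The retraction of `K` with `a_1 ↦ (c_1 c_2 ⋯ c_m)⁻¹`. -/
theorem retract0 (u : F n) :
    Coprod.lift (cyc (kk n) 0 (cgen n 0 * ctail n)⁻¹) (MonoidHom.id (F n)) (gamHom n u) = u := by
  refine retract n _ ?_ u
  simp only [gam, map_mul, map_inv, map_list_prod, List.map_map, Coprod.lift_apply_inl]
  rw [cyc_a _ (by omega)]
  have : ∀ l ∈ List.range (n + 1), ((Coprod.lift (cyc (kk n) 0 (cgen n 0 * ctail n)⁻¹)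
      (MonoidHom.id (F n))) ∘ fun l => Coprod.inl (aΓ (kk n) (2 * (l + 1))) *
        Coprod.inr (cgen n (l + 1))) l = cgen n (l + 1) := by
    intro l hl
    rw [List.mem_range] at hl
    simp only [Function.comp_apply, map_mul, Coprod.lift_apply_inl, Coprod.lift_apply_inr]
    rw [cyc_a _ (by simp only [kk]; omega), if_neg (by omega), if_neg (by omega)]
    simp
  rw [List.map_congr_left this, ← ctail]
  simp

/-- The retraction of `K` with `a_3 ↦ (c_2 ⋯ c_m c_1)⁻¹`. -/
theorem retract1 (u : F n) :
    Coprod.lift (cyc (kk n) 1 (ctail n * cgen n 0)⁻¹) (MonoidHom.id (F n)) (gamHom n u) = u := by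
  refine retract n _ ?_ u
  simp only [gam, map_mul, map_inv, map_list_prod, List.map_map, Coprod.lift_apply_inl]
  rw [cyc_a _ (by omega), List.prod_range_succ']
  have : ∀ l ∈ List.range n, ((Coprod.lift (cyc (kk n) 1 (ctail n * cgen n 0)⁻¹)
      (MonoidHom.id (F n))) ∘ fun l => Coprod.inl (aΓ (kk n) (2 * (l + 1))) *
        Coprod.inr (cgen n (l + 1))) (l.succ) = cgen n (l + 1 + 1) := by
    intro l hl
    rw [List.mem_range] at hl
    simp only [Function.comp_apply, map_mul, Coprod.lift_apply_inl, Coprod.lift_apply_inr]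
    rw [cyc_a _ (by simp only [kk]; omega), if_neg (by omega), if_neg (by omega)]
    simp
  rw [List.map_congr_left this]
  simp only [Function.comp_apply, map_mul, Coprod.lift_apply_inl, Coprod.lift_apply_inr]
  rw [cyc_a _ (by simp only [kk]; omega)]
  have ht : ctail n = cgen n 1 * ((List.range n).map fun l => cgen n (l + 1 + 1)).prod := by
    rw [ctail, List.prod_range_succ']
  simp [ht, mul_assoc]

theorem gamHom_injective : Function.Injective (gamHom n) :=
  Function.LeftInverse.injective (retract0 n)

/-- The cyclic subgroups generated by `c_1 c_2 ⋯ c_m` and `c_2 ⋯ c_m c_1` meet trivially. -/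
theorem cyclic_inter (u : F n) (h0 : u ∈ Subgroup.zpowers (cgen n 0 * ctail n)⁻¹)
    (h1 : u ∈ Subgroup.zpowers (ctail n * cgen n 0)⁻¹) : u = 1 := by
  -- `c_1` acts on `ℚ` by `t ↦ 2t`, `c_2` by `t ↦ t + 1`, and the other generators trivially. Then
  -- `c_1 c_2 ⋯ c_m` is `t ↦ 2t + 2`, whose nonzero powers fix only `-2`, while `c_2 ⋯ c_m c_1`
  -- is `t ↦ 2t + 1`, which fixes `-1`.
  let f : F n →* Equiv.Perm ℚ := FreeGroup.lift fun l : Fin (n + 2) =>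
    if l.1 = 0 then Equiv.mulLeft₀ (2 : ℚ) two_ne_zero
    else if l.1 = 1 then Equiv.addRight (1 : ℚ) else 1
  have f0 : f (cgen n 0) = Equiv.mulLeft₀ (2 : ℚ) two_ne_zero := by
    simp [f, cgen]
  have f1 : f (cgen n 1) = Equiv.addRight (1 : ℚ) := by
    simp [f, cgen]
  have f2 : ∀ l, f (cgen n (l + 1 + 1)) = 1 := by
    intro l
    unfold cgen
    split_ifs <;> simp [f]
  have ft : f (ctail n) = Equiv.addRight (1 : ℚ) := by
    rw [ctail, List.prod_range_succ', map_mul, f1, map_list_prod, List.prod_eq_one, mul_one]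
    intro y hy
    simp only [List.map_map, List.mem_map, Function.comp_apply] at hy
    obtain ⟨l, -, rfl⟩ := hy
    exact f2 l
  have hd : ∀ (N : ℕ), (f (cgen n 0 * ctail n) ^ N) (-1) = 2 ^ N - 2 := by
    intro N
    induction N with
    | zero => norm_num
    | succ N ih =>
      rw [pow_succ', Equiv.Perm.mul_apply, ih, map_mul, f0, ft]
      simp only [Equiv.Perm.mul_apply, Equiv.coe_addRight, Equiv.mulLeft₀_apply]
      ring
  have hz : ∀ N : ℕ, (f (cgen n 0 * ctail n) ^ N) (-1) = -1 → N = 0 := by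
    intro N hN
    rw [hd] at hN
    have h2 : (2 : ℚ) ^ N = 1 := by linarith
    by_contra hN0
    exact (one_lt_pow₀ (by norm_num : (1 : ℚ) < 2) hN0).ne' h2
  have he : f u (-1) = -1 := by
    rw [Subgroup.zpowers_inv] at h1
    obtain ⟨N, rfl⟩ := h1
    rw [map_zpow]
    refine Function.IsFixedPt.perm_zpow ?_ N
    show f (ctail n * cgen n 0) (-1) = -1
    rw [map_mul, f0, ft]
    norm_num [Equiv.Perm.mul_apply]
  rw [Subgroup.zpowers_inv] at h0
  obtain ⟨N, rfl⟩ := h0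
  simp only [map_zpow] at he
  obtain ⟨N, rfl | rfl⟩ := N.eq_nat_or_neg
  · rw [zpow_natCast] at he
    simp [hz N he]
  · rw [zpow_neg, zpow_natCast, Equiv.Perm.inv_eq_iff_eq] at he
    simp [hz N he.symm]

/-- The subgroup generated by the `γ_l` meets `Γ` trivially. -/
theorem gamHom_mem_inl (u : F n) (g : Gamma (kk n)) (h : gamHom n u = Coprod.inl g) : u = 1 := by
  refine cyclic_inter n u ?_ ?_
  · have := retract0 n u
    rw [h, Coprod.lift_apply_inl] at this
    rw [← this]; exact cyc_mem _ _ _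
  · have := retract1 n u
    rw [h, Coprod.lift_apply_inl] at this
    rw [← this]; exact cyc_mem _ _ _

/-! ### The HNN extension `H` -/

/-- The inclusion of `F` in `K` as the subgroup generated by `a_2, a_4, …, a_k`. -/
def evenK : F n →* K n := (Coprod.inl : Gamma (kk n) →* K n).comp (evenHom n)

theorem evenK_injective : Function.Injective (evenK n) :=
  Coprod.inl_injective.comp (evenHom_injective n)

/-- The isomorphism `⟨γ_1, …, γ_m⟩ ≃ ⟨a_2, a_4, …, a_k⟩` with `γ_l ↦ a_{2l}`. -/
noncomputable def assoc : (gamHom n).range ≃* (evenK n).range :=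
  (MonoidHom.ofInjective (gamHom_injective n)).symm.trans
    (MonoidHom.ofInjective (evenK_injective n))

/-- The HNN extension of `K` by a stable letter conjugating each `γ_l` to `a_{2l}`. -/
abbrev H := HNNExtension (K n) (gamHom n).range (evenK n).range (assoc n)

/-- The inclusion of `Γ` in `H`. -/
noncomputable def incl : Gamma (kk n) →* H n := HNNExtension.of.comp Coprod.inl

theorem conj_gam (l : ℕ) (hl : l < n + 2) :
    (HNNExtension.t : H n)⁻¹ * incl n (aΓ (kk n) (2 * l + 1)) * HNNExtension.t
      = HNNExtension.of (gam n l) := by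
  have h := HNNExtension.t_mul_of (φ := assoc n)
    (MonoidHom.ofInjective (gamHom_injective n) (FreeGroup.of ⟨l, hl⟩))
  have h1 : ((MonoidHom.ofInjective (gamHom_injective n) (FreeGroup.of ⟨l, hl⟩) :
      (gamHom n).range) : K n) = gam n l := by
    rw [MonoidHom.ofInjective_apply, gamHom, FreeGroup.lift_apply_of]
  have h2 : ((assoc n (MonoidHom.ofInjective (gamHom_injective n) (FreeGroup.of ⟨l, hl⟩)) :
      (evenK n).range) : K n) = Coprod.inl (aΓ (kk n) (2 * l + 1)) := by
    rw [assoc, MulEquiv.trans_apply, MulEquiv.symm_apply_apply, MonoidHom.ofInjective_apply, evenK,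
      MonoidHom.comp_apply, evenHom, FreeGroup.lift_apply_of]
  rw [h1, h2] at h
  rw [mul_assoc, inv_mul_eq_iff_eq_mul, h]
  rfl

/-- The stable letter solves the equation `w(t) = 1`. -/
theorem relVal_t :
    relVal (kk n) (fun j => incl n (aΓ (kk n) j)) (HNNExtension.t : H n) = 1 := by
  have hk : kk n / 2 = n + 2 := by simp [kk]
  have h := congrArg (HNNExtension.of (φ := assoc n)) (gam_rel n)
  rw [map_list_prod, List.map_map, map_one] at h
  rw [relVal, hk, ← h]
  congr 1
  refine List.map_congr_left fun l hl => ?_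
  rw [List.mem_range] at hl
  rw [Function.comp_apply, map_mul, ← conj_gam n l hl]
  simp [incl, mul_assoc]

/-- The homomorphism `Φ_i : Γ → H` with `x_i ↦ t` and every other generator mapped to its copy
in `Γ ≤ H`. -/
noncomputable def toH (i : ℕ) : Gamma (kk n) →* H n :=
  gammaLift (fun j => incl n (aΓ (kk n) j))
    (fun j => if j = i then HNNExtension.t else incl n (xΓ (kk n) j)) (by
      intro j
      split_ifs
      · exact relVal_t n
      · rw [← map_relVal, relVal_gamma, map_one])

theorem toH_x (i : ℕ) : toH n i (xΓ (kk n) i) = HNNExtension.t := by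
  simp [toH, gammaLift_x]

open Filter in
/-- Each element of `Γ` involves only finitely many `x_i`. -/
theorem eventually_toH (g : Gamma (kk n)) : ∀ᶠ i in atTop, toH n i g = incl n g := by
  refine gamma_induction (p := fun g => ∀ᶠ i in atTop, toH n i g = incl n g) g ?_ ?_ ?_ ?_ ?_
  · intro j hj
    exact Eventually.of_forall fun i => gammaLift_a _ _ _ hj
  · intro j
    filter_upwards [eventually_gt_atTop j] with i hi
    rw [toH, gammaLift_x, if_neg hi.ne]
  · simp
  · intro g h hg hh
    filter_upwards [hg, hh] with i h1 h2
    rw [map_mul, map_mul, h1, h2]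
  · intro g hg
    filter_upwards [hg] with i h1
    rw [map_inv, map_inv, h1]

/-- Evaluation `W ↦ W(t)` from `Γ[x]⁺` to `H`. -/
noncomputable def evalT : Coprod (Gamma (kk n)) (Multiplicative ℕ) →* H n :=
  Coprod.lift (incl n) (powersHom (H n) HNNExtension.t)

open Filter in
theorem eventually_eval (W : Coprod (Gamma (kk n)) (Multiplicative ℕ)) :
    ∀ᶠ i in atTop, toH n i (monoidEval (xΓ (kk n) i) W) = evalT n W := by
  induction W using Coprod.induction_on with
  | inl g => simpa [monoidEval, evalT] using eventually_toH n g
  | inr N => simp [monoidEval, evalT, toH_x]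
  | mul W V hW hV =>
    filter_upwards [hW, hV] with i h1 h2
    simp only [map_mul, h1, h2]

theorem evalT_injective : Function.Injective (evalT n) := by
  intro W V h
  obtain ⟨g, L, rfl⟩ := coprod_exists_word W
  obtain ⟨g', M, rfl⟩ := coprod_exists_word V
  have key : ∀ (g : Gamma (kk n)) (L : List (Gamma (kk n))), evalT n (Coprod.inl g *
      (L.map fun l => Coprod.inr (Multiplicative.ofAdd 1) * Coprod.inl l).prod) =
      (posWord (gamHom n).range (evenK n).range (Coprod.inl g)
        (L.map (Coprod.inl : _ →* K n))).prod (assoc n) := by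
    intro g L
    rw [posWord_prod]
    simp [evalT, incl, map_list_prod, Function.comp_def]
  rw [key, key] at h
  have hB : ∀ b ∈ (evenK n).range, b ∈ (Coprod.inl : Gamma (kk n) →* K n).range := by
    rintro _ ⟨u, rfl⟩
    exact ⟨evenHom n u, rfl⟩
  have hA : ∀ c ∈ (gamHom n).range, c ∈ (Coprod.inl : Gamma (kk n) →* K n).range → c = 1 := by
    rintro _ ⟨u, rfl⟩ ⟨y, hy⟩
    rw [gamHom_mem_inl n u y hy.symm, map_one]
  obtain ⟨rfl, rfl⟩ := word_injective (assoc n) (Coprod.inl : Gamma (kk n) →* K n)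
    Coprod.inl_injective hB hA L M g g' h
  rfl

end Base

end ZariskiDense

open ZariskiDense Filter in
/-- The set `X = {x_1, x_2, …}` of images of the generators `x_i` is dense in `Γ` with
respect to the semigroup Zariski topology `Zar⁺(Γ)`. -/
theorem Xset_dense_in_zariskiSemigroup (k : ℕ) (hk8 : 8 ≤ k) (hke : Even k) :
    @Dense (Gamma k) (zariskiSemigroup (Gamma k)) (Xset k) := by
  obtain ⟨n, rfl⟩ : ∃ n, k = kk n := by
    obtain ⟨r, rfl⟩ := hke
    exact ⟨r - 2, by simp only [kk]; omega⟩
  let _ : TopologicalSpace (Gamma (kk n)) := zariskiSemigroup (Gamma (kk n))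
  intro g
  -- The sequence `x_i` converges to every point `g`.
  have hlim : Tendsto (xΓ (kk n)) atTop (nhds g) := by
    refine TopologicalSpace.tendsto_nhds_generateFrom_iff.2 ?_
    rintro _ ⟨W, V, rfl⟩ hg
    filter_upwards [eventually_eval n W, eventually_eval n V] with i hW hV he
    refine hg ?_
    rw [evalT_injective n (by rw [← hW, ← hV, he] : evalT n W = evalT n V)]
  exact mem_closure_of_tendsto hlim (Eventually.of_forall fun i => ⟨i, rfl⟩)
end

section
/- In the group Γ, the element a_1 a_{k+1}^{-1} a_2 a_{k+1} a_3 a_{k+1}^{-1} a_4 a_{k+1} ⋯ a_{k-1} a_{k+1}^{-1} a_k a_{k+1} (the relator word pattern evaluated at a_{k+1} in place of x_i) is not equal to the identity element. -/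
/-- The value at `y` of a relator pattern whose coefficients beyond the first two are trivial. -/
lemma pattern_prod_eq {G : Type*} [Group G] (g : ℕ → G) (y : G) (n : ℕ) (hn : 0 < n)
    (hg : ∀ j, 2 ≤ j → j < 2 * n → g j = 1) :
    ((List.range n).map (fun l => g (2 * l) * y⁻¹ * g (2 * l + 1) * y)).prod
      = g 0 * y⁻¹ * g 1 * y := by
  obtain ⟨m, rfl⟩ : ∃ m, n = m + 1 := ⟨n - 1, by omega⟩
  rw [List.range_succ_eq_map, List.map_cons, List.prod_cons, List.prod_eq_one]
  · simp
  · intro z hz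
    simp only [List.map_map, List.mem_map, List.mem_range, Function.comp_apply] at hz
    obtain ⟨l, hl, rfl⟩ := hz
    rw [hg _ (by omega) (by omega), hg _ (by omega) (by omega)]
    simp

/-- The images of the generators: `a_1 ↦ (0 1)`, `a_2 ↦ (0 1)⁻¹`, `a_{k+1} ↦ (1 2)`, and every
other generator goes to the identity. -/
def genImage (k : ℕ) : Alphabet k → Equiv.Perm (Fin 3)
  | Sum.inl j =>
    if j.val = 0 then Equiv.swap 0 1
    else if j.val = 1 then (Equiv.swap 0 1)⁻¹
    else if j.val = k then Equiv.swap 1 2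
    else 1
  | Sum.inr _ => 1

lemma genImage_inl_eq_one (k : ℕ) (j : ℕ) (h2 : 2 ≤ j) (hj : j < k) :
    genImage k (Sum.inl ⟨j % (k + 1), Nat.mod_lt _ (Nat.succ_pos k)⟩) = 1 := by
  have h : j % (k + 1) = j := Nat.mod_eq_of_lt (by omega)
  simp only [genImage, h]
  rw [if_neg (by omega), if_neg (by omega), if_neg (by omega)]

lemma lift_genImage_rels (k : ℕ) (hk8 : 8 ≤ k) :
    ∀ r ∈ rels k, FreeGroup.lift (genImage k) r = 1 := by
  rintro _ ⟨i, rfl⟩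
  simp only [relw, map_list_prod, List.map_map, Function.comp_def, map_mul, map_inv, gena, genx,
    FreeGroup.lift_apply_of]
  rw [pattern_prod_eq
    (fun j => genImage k (Sum.inl ⟨j % (k + 1), Nat.mod_lt _ (Nat.succ_pos k)⟩))
    (genImage k (Sum.inr i)) (k / 2) (by omega)
    (fun j h2 hj => genImage_inl_eq_one k j h2 (by omega))]
  have h1 : 1 % (k + 1) = 1 := Nat.mod_eq_of_lt (by omega)
  simp [genImage, h1]

/-- In `Γ`, the element `a_1 a_{k+1}⁻¹ a_2 a_{k+1} ⋯ a_{k-1} a_{k+1}⁻¹ a_k a_{k+1}`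
(the relator pattern evaluated at `a_{k+1}` in place of `x_i`) is not the identity.
(Here `aΓ k k` is the image of `a_{k+1}`, with 0-indexed generators.) -/
theorem relator_pattern_at_last_generator_ne_one (k : ℕ) (hk8 : 8 ≤ k) (hke : Even k) :
    ((List.range (k / 2)).map
      (fun l => aΓ k (2 * l) * (aΓ k k)⁻¹ * aΓ k (2 * l + 1) * aΓ k k)).prod ≠ 1 := by
  intro h
  have h' := congrArg (PresentedGroup.toGroup (lift_genImage_rels k hk8)) h
  simp only [map_list_prod, List.map_map, Function.comp_def, map_mul, map_inv, aΓ,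
    PresentedGroup.toGroup.of, map_one] at h'
  rw [pattern_prod_eq
    (fun j => genImage k (Sum.inl ⟨j % (k + 1), Nat.mod_lt _ (Nat.succ_pos k)⟩))
    _ (k / 2) (by omega)
    (fun j h2 hj => genImage_inl_eq_one k j h2 (by omega))] at h'
  have h1 : 1 % (k + 1) = 1 := Nat.mod_eq_of_lt (by omega)
  have hk : k % (k + 1) = k := Nat.mod_eq_of_lt (by omega)
  have hk0 : k ≠ 0 := by omega
  have hk1 : k ≠ 1 := by omega
  simp only [genImage, h1, hk, hk0, hk1, Nat.zero_mod, if_true, if_false, one_ne_zero] at h'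
  revert h'
  decide
end

section
/- The set X = {x_1, x_2, …} of images of the generators x_i is not dense in Γ with respect to the group Zariski topology Zar(Γ): the set C = {g ∈ Γ : a_1 g^{-1} a_2 g a_3 g^{-1} a_4 g ⋯ a_{k-1} g^{-1} a_k g = 1} is Zar(Γ)-closed, contains X, and does not contain a_{k+1}; in particular C is a proper closed set containing X. -/
open Equiv in
/-- The images in `S₃` of the generators: `a_1, a_2 ↦ (0 1)`, `a_{k+1} ↦ (1 2)`, and all the other
generators, in particular all `x_i`, go to `1`. -/
def genToS3 (k : ℕ) : Alphabet k → Perm (Fin 3)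
  | Sum.inl j => if (j : ℕ) < 2 then swap 0 1 else if (j : ℕ) = k then swap 1 2 else 1
  | Sum.inr _ => 1

/-- If all factors of index `≥ 2` in the defining word are trivial, only its first block
`a_1 g⁻¹ a_2 g` survives. -/
lemma prod_blocks_eq {H : Type*} [Group H] (k : ℕ) (hk : 2 ≤ k) (f : ℕ → H) (g : H)
    (hf : ∀ j, 2 ≤ j → j < k → f j = 1) :
    ((List.range (k / 2)).map (fun l => f (2 * l) * g⁻¹ * f (2 * l + 1) * g)).prod =
      f 0 * g⁻¹ * f 1 * g := by
  obtain ⟨m, hm⟩ : ∃ m, k / 2 = m + 1 := ⟨k / 2 - 1, by omega⟩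
  rw [hm, List.range_succ_eq_map, List.map_cons, List.prod_cons, List.prod_eq_one]
  · simp
  · intro y hy
    simp only [List.map_map, List.mem_map, List.mem_range, Function.comp_apply] at hy
    obtain ⟨l, hl, rfl⟩ := hy
    rw [hf _ (by omega) (by omega), hf _ (by omega) (by omega)]
    simp

lemma genToS3_inl_of_lt_two (k j : ℕ) (hk : 8 ≤ k) (hj : j < 2) (h : j % (k + 1) < k + 1) :
    genToS3 k (Sum.inl ⟨j % (k + 1), h⟩) = Equiv.swap 0 1 := by
  have : j % (k + 1) = j := Nat.mod_eq_of_lt (by omega)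
  simp [genToS3, this, hj]

lemma genToS3_inl_middle (k j : ℕ) (h2 : 2 ≤ j) (hj : j < k) (h : j % (k + 1) < k + 1) :
    genToS3 k (Sum.inl ⟨j % (k + 1), h⟩) = 1 := by
  have : j % (k + 1) = j := Nat.mod_eq_of_lt (by omega)
  simp [genToS3, this, hj.ne, h2.not_gt]

lemma genToS3_inl_last (k : ℕ) (hk : 8 ≤ k) (h : k % (k + 1) < k + 1) :
    genToS3 k (Sum.inl ⟨k % (k + 1), h⟩) = Equiv.swap 1 2 := by
  have : k % (k + 1) = k := Nat.mod_eq_of_lt (by omega)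
  have h2 : ¬ k < 2 := by omega
  simp [genToS3, this, h2]

lemma lift_genToS3_rels (k : ℕ) (hk : 8 ≤ k) :
    ∀ r ∈ rels k, FreeGroup.lift (genToS3 k) r = 1 := by
  rintro _ ⟨i, rfl⟩
  have hx : FreeGroup.lift (genToS3 k) (genx k i) = 1 := by simp [genx, genToS3]
  have key := prod_blocks_eq k (by omega)
    (fun j => FreeGroup.lift (genToS3 k) (gena k j)) 1
    (fun j h2 hj => by
      simp only [gena, FreeGroup.lift_apply_of]
      exact genToS3_inl_middle k j h2 hj _)
  rw [relw, map_list_prod, List.map_map]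
  simp only [Function.comp_def, map_mul, map_inv, hx]
  rw [key]
  simp only [gena, FreeGroup.lift_apply_of]
  rw [genToS3_inl_of_lt_two k 0 hk (by omega), genToS3_inl_of_lt_two k 1 hk (by omega)]
  simp

/-- The homomorphism `Γ → S₃` separating the word at `a_{k+1}` from `1`. -/
def toS3 (k : ℕ) (hk : 8 ≤ k) : Gamma k →* Equiv.Perm (Fin 3) :=
  PresentedGroup.toGroup (lift_genToS3_rels k hk)

/-- The set `C = {g ∈ Γ : a_1 g⁻¹ a_2 g ⋯ a_{k-1} g⁻¹ a_k g = 1}` is `Zar(Γ)`-closed,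
contains `X`, and omits `a_{k+1}`; in particular `X` is not dense in `Γ` with respect to the
group Zariski topology `Zar(Γ)`. -/
theorem Xset_not_dense_in_zariskiGroup (k : ℕ) (hk8 : 8 ≤ k) (hke : Even k) :
    @IsClosed (Gamma k) (zariskiGroup (Gamma k))
      {g : Gamma k | ((List.range (k / 2)).map
        (fun l => aΓ k (2 * l) * g⁻¹ * aΓ k (2 * l + 1) * g)).prod = 1} ∧
    Xset k ⊆ {g : Gamma k | ((List.range (k / 2)).map
        (fun l => aΓ k (2 * l) * g⁻¹ * aΓ k (2 * l + 1) * g)).prod = 1} ∧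
    aΓ k k ∉ {g : Gamma k | ((List.range (k / 2)).map
        (fun l => aΓ k (2 * l) * g⁻¹ * aΓ k (2 * l + 1) * g)).prod = 1} ∧
    ¬ @Dense (Gamma k) (zariskiGroup (Gamma k)) (Xset k) := by
  have hclosed : @IsClosed (Gamma k) (zariskiGroup (Gamma k))
      {g : Gamma k | ((List.range (k / 2)).map
        (fun l => aΓ k (2 * l) * g⁻¹ * aΓ k (2 * l + 1) * g)).prod = 1} := by
    let _ := zariskiGroup (Gamma k)
    rw [← isOpen_compl_iff]
    let x : Monoid.Coprod (Gamma k) (Multiplicative ℤ) :=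
      Monoid.Coprod.inr (Multiplicative.ofAdd 1)
    refine TopologicalSpace.isOpen_generateFrom_of_mem
      ⟨((List.range (k / 2)).map (fun l => Monoid.Coprod.inl (aΓ k (2 * l)) * x⁻¹ *
        Monoid.Coprod.inl (aΓ k (2 * l + 1)) * x)).prod, ?_⟩
    ext g
    have hx : groupEval g x = g := by simp [groupEval, x]
    have ha : ∀ a : Gamma k, groupEval g (Monoid.Coprod.inl a) = a := by simp [groupEval]
    simp only [Set.mem_compl_iff, Set.mem_ofPred_eq, map_list_prod, List.map_map,
      Function.comp_def, map_mul, map_inv, hx, ha, ne_eq]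
  have hsub : Xset k ⊆ {g : Gamma k | ((List.range (k / 2)).map
        (fun l => aΓ k (2 * l) * g⁻¹ * aΓ k (2 * l + 1) * g)).prod = 1} := by
    rintro _ ⟨i, rfl⟩
    have h : PresentedGroup.mk (rels k) (relw k i) = 1 :=
      PresentedGroup.one_of_mem ⟨i, rfl⟩
    rw [relw, map_list_prod, List.map_map] at h
    simp only [Function.comp_def, map_mul, map_inv] at h
    exact h
  have hnot : aΓ k k ∉ {g : Gamma k | ((List.range (k / 2)).map
        (fun l => aΓ k (2 * l) * g⁻¹ * aΓ k (2 * l + 1) * g)).prod = 1} := by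
    intro h
    have h' := congrArg (toS3 k hk8) h
    rw [map_list_prod, List.map_map, map_one] at h'
    simp only [Function.comp_def, map_mul, map_inv] at h'
    rw [prod_blocks_eq k (by omega) (fun j => toS3 k hk8 (aΓ k j)) (toS3 k hk8 (aΓ k k))
      (fun j h2 hj => by
        simp only [aΓ, toS3, PresentedGroup.toGroup.of]
        exact genToS3_inl_middle k j h2 hj _)] at h'
    simp only [aΓ, toS3, PresentedGroup.toGroup.of] at h'
    rw [genToS3_inl_of_lt_two k 0 hk8 (by omega), genToS3_inl_of_lt_two k 1 hk8 (by omega),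
      genToS3_inl_last k hk8] at h'
    revert h'
    decide
  refine ⟨hclosed, hsub, hnot, fun hd => hnot ?_⟩
  let _ := zariskiGroup (Gamma k)
  exact closure_minimal hsub hclosed (hd _)
end

section
/- Let S be the monoid with zero presented by generators x_1, x_2, …, y_1, y_2, … and relations x_i y_i = 0 for all i. For every P, Q ∈ S[x]⁺ such that C = {s ∈ S : P(s) = Q(s)} is a nonempty proper subset of S, the intersection of C with the set {x_1, x_2, …, y_1, y_2, …} of (images of the) generators is finite. -/
/-- The base monoid with zero: `WithZero (FreeMonoid (ℕ ⊕ ℕ))`, whose nonzero elements are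
words in the generators `x_i` (left copy of `ℕ`) and `y_i` (right copy of `ℕ`). -/
abbrev BaseS : Type := WithZero (FreeMonoid (ℕ ⊕ ℕ))

/-- The generator `x_i` in the base monoid. -/
def xBase (i : ℕ) : BaseS := ↑(FreeMonoid.of (Sum.inl i : ℕ ⊕ ℕ))

/-- The generator `y_i` in the base monoid. -/
def yBase (i : ℕ) : BaseS := ↑(FreeMonoid.of (Sum.inr i : ℕ ⊕ ℕ))

/-- The defining relations: `x_i · y_i = 0` for every `i`. -/
def xyRel : BaseS → BaseS → Prop := fun a b =>
  ∃ i : ℕ, a = xBase i * yBase i ∧ b = 0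

/-- The monoid congruence generated by the relations `x_i · y_i = 0`. -/
def Scon : Con BaseS := conGen xyRel

/-- The monoid `S = ⟨x_1, x_2, …, y_1, y_2, … ∣ x_i y_i = 0⟩`. -/
abbrev Smon : Type := Scon.Quotient

/-- The image of the generator `x_i` in `S`. -/
def xS (i : ℕ) : Smon := Scon.mk' (xBase i)

/-- The image of the generator `y_i` in `S`. -/
def yS (i : ℕ) : Smon := Scon.mk' (yBase i)

/-- The image of the zero element in `S`. -/
def zS : Smon := Scon.mk' 0

/-- The word `u` contains a factor `x_i y_i`. -/
def HasBad (u : List (ℕ ⊕ ℕ)) : Prop :=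
  ∃ i : ℕ, ∃ p q : List (ℕ ⊕ ℕ), u = p ++ Sum.inl i :: Sum.inr i :: q

/-- The elements of the base monoid that become zero in `S`: zero itself, for which the condition
is vacuous, and the words with a factor `x_i y_i`. -/
def BadBase (a : BaseS) : Prop :=
  ∀ u : FreeMonoid (ℕ ⊕ ℕ), a = (u : BaseS) → HasBad u.toList

lemma BadBase.mul_right {a : BaseS} (ha : BadBase a) (c : BaseS) : BadBase (a * c) := by
  intro u hu
  induction a using WithZero.recZeroCoe with
  | zero => simp at hu
  | coe v =>
    induction c using WithZero.recZeroCoe with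
    | zero => simp at hu
    | coe w =>
      obtain ⟨i, p, q, h⟩ := ha v rfl
      rw [← WithZero.coe_mul, WithZero.coe_inj] at hu
      exact ⟨i, p, q ++ w.toList, by rw [← hu, FreeMonoid.toList_mul, h]; simp⟩

lemma BadBase.mul_left {a : BaseS} (ha : BadBase a) (c : BaseS) : BadBase (c * a) := by
  intro u hu
  induction a using WithZero.recZeroCoe with
  | zero => simp at hu
  | coe v =>
    induction c using WithZero.recZeroCoe with
    | zero => simp at hu
    | coe w =>
      obtain ⟨i, p, q, h⟩ := ha v rfl
      rw [← WithZero.coe_mul, WithZero.coe_inj] at hu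
      exact ⟨i, w.toList ++ p, q, by rw [← hu, FreeMonoid.toList_mul, h]; simp⟩

/-- The congruence collapsing the ideal `BadBase` to a point. -/
def reesCon : Con BaseS where
  r a b := a = b ∨ (BadBase a ∧ BadBase b)
  iseqv :=
    { refl := fun _ => Or.inl rfl
      symm := by rintro a b (h | h); exacts [Or.inl h.symm, Or.inr h.symm]
      trans := by
        rintro a b c (rfl | h) (rfl | h')
        exacts [Or.inl rfl, Or.inr h', Or.inr h, Or.inr ⟨h.1, h'.2⟩] }
  mul' := by
    rintro a b c d (rfl | h) (rfl | h')
    exacts [Or.inl rfl, Or.inr ⟨h'.1.mul_left _, h'.2.mul_left _⟩,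
      Or.inr ⟨h.1.mul_right _, h.2.mul_right _⟩, Or.inr ⟨h.1.mul_right _, h.2.mul_right _⟩]

lemma badBase_zero : BadBase 0 := fun _ hu => absurd hu.symm WithZero.coe_ne_zero

lemma eq_or_bad_of_mk_eq {a b : BaseS} (h : Scon.mk' a = Scon.mk' b) :
    a = b ∨ (BadBase a ∧ BadBase b) := by
  have hle : Scon ≤ reesCon := by
    refine Con.conGen_le.2 ?_
    rintro a b ⟨i, rfl, rfl⟩
    refine Or.inr ⟨fun u hu => ?_, badBase_zero⟩
    rw [xBase, yBase, ← WithZero.coe_mul, WithZero.coe_inj] at hu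
    exact ⟨i, [], [], by rw [← hu]; rfl⟩
  exact hle ((Con.eq Scon).1 h)

/-- The image in `S` of a letter. -/
def gen (a : ℕ ⊕ ℕ) : Smon := Scon.mk' (FreeMonoid.of a : FreeMonoid (ℕ ⊕ ℕ))

/-- The index of a letter: `x_i` and `y_i` both have index `i`. -/
def idx : ℕ ⊕ ℕ → ℕ := Sum.elim id id

/-- Evaluation at `s` of a word over the generators and the variable `none`. -/
def evalWord (s : Smon) : FreeMonoid (Option (ℕ ⊕ ℕ)) →* Smon :=
  FreeMonoid.lift fun o => o.elim s gen

/-- Substitution of the letter `g` for the variable `none`. -/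
def substVar (g : ℕ ⊕ ℕ) (w : List (Option (ℕ ⊕ ℕ))) : List (ℕ ⊕ ℕ) := w.map fun o => o.getD g

/-- The word `w` contains a factor `x_i y_i` not involving the variable. -/
def HasBadVar (w : List (Option (ℕ ⊕ ℕ))) : Prop :=
  ∃ i : ℕ, ∃ p q, w = p ++ some (Sum.inl i) :: some (Sum.inr i) :: q

/-- No letter of `w` has the same index as `g`. -/
def Fresh (g : ℕ ⊕ ℕ) (w : List (Option (ℕ ⊕ ℕ))) : Prop :=
  ∀ a : ℕ ⊕ ℕ, some a ∈ w → idx a ≠ idx g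

lemma zS_mul (s : Smon) : zS * s = zS := by
  induction s using Con.induction_on with
  | H a => exact congrArg Scon.mk' (zero_mul a)

lemma mul_zS (s : Smon) : s * zS = zS := by
  induction s using Con.induction_on with
  | H a => exact congrArg Scon.mk' (mul_zero a)

lemma gen_mul_gen (i : ℕ) : gen (Sum.inl i) * gen (Sum.inr i) = zS :=
  (Con.eq Scon).2 (ConGen.Rel.of _ _ ⟨i, rfl, rfl⟩)

lemma evalWord_of_hasBadVar {w : FreeMonoid (Option (ℕ ⊕ ℕ))} (h : HasBadVar w.toList)
    (s : Smon) : evalWord s w = zS := by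
  obtain ⟨i, p, q, h⟩ := h
  have : w = FreeMonoid.ofList p * (FreeMonoid.of (some (Sum.inl i)) *
      FreeMonoid.of (some (Sum.inr i))) * FreeMonoid.ofList q := by
    apply FreeMonoid.toList.injective
    rw [h]; simp
  rw [this, map_mul, map_mul, map_mul]
  simp only [evalWord, FreeMonoid.lift_eval_of, Option.elim_some]
  rw [gen_mul_gen, mul_zS, zS_mul]

lemma mk_coe_eq_lift (u : FreeMonoid (ℕ ⊕ ℕ)) :
    Scon.mk' (u : BaseS) = FreeMonoid.lift gen u := by
  induction u using FreeMonoid.inductionOn' with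
  | one => simp
  | of_mul a u ih => rw [WithZero.coe_mul, map_mul, map_mul, ih]; simp [gen]

lemma evalWord_gen (g : ℕ ⊕ ℕ) (w : FreeMonoid (Option (ℕ ⊕ ℕ))) :
    evalWord (gen g) w =
      Scon.mk' (FreeMonoid.ofList (substVar g w.toList) : FreeMonoid (ℕ ⊕ ℕ)) := by
  rw [mk_coe_eq_lift]
  induction w using FreeMonoid.inductionOn' with
  | one => simp [substVar]
  | of_mul a u ih => cases a <;> simp_all [substVar, evalWord, FreeMonoid.ofList_cons]

lemma monoidEval_eq_zero_or_word (P : Monoid.Coprod Smon (Multiplicative ℕ)) :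
    (∀ s, monoidEval s P = zS) ∨ ∃ w, ∀ s, monoidEval s P = evalWord s w := by
  induction P using Monoid.Coprod.induction_on with
  | inl m =>
    induction m using Con.induction_on with
    | H a =>
      induction a using WithZero.recZeroCoe with
      | zero => left; intro s; simp [monoidEval]; rfl
      | coe u =>
        right
        refine ⟨FreeMonoid.map some u, fun s => ?_⟩
        have h := mk_coe_eq_lift u
        rw [evalWord, FreeMonoid.lift_apply, FreeMonoid.toList_map, List.map_map]
        rw [FreeMonoid.lift_apply] at h
        simp only [monoidEval, Monoid.Coprod.lift_apply_inl, MonoidHom.id_apply]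
        exact h
  | inr n =>
    right
    refine ⟨FreeMonoid.of none ^ n.toAdd, fun s => ?_⟩
    simp [monoidEval, evalWord]
  | mul P Q hP hQ =>
    rcases hP with hP | ⟨v, hP⟩
    · left; intro s; rw [map_mul, hP, zS_mul]
    rcases hQ with hQ | ⟨w, hQ⟩
    · left; intro s; rw [map_mul, hQ, mul_zS]
    · exact Or.inr ⟨v * w, fun s => by rw [map_mul, map_mul, hP, hQ]⟩

lemma monoidEval_eq_zero_or_reduced (P : Monoid.Coprod Smon (Multiplicative ℕ)) :
    (∀ s, monoidEval s P = zS) ∨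
      ∃ w, ¬ HasBadVar w.toList ∧ ∀ s, monoidEval s P = evalWord s w := by
  rcases monoidEval_eq_zero_or_word P with h | ⟨w, h⟩
  · exact Or.inl h
  · by_cases hw : HasBadVar w.toList
    · exact Or.inl fun s => by rw [h, evalWord_of_hasBadVar hw]
    · exact Or.inr ⟨w, hw, h⟩

lemma not_hasBad_substVar {g : ℕ ⊕ ℕ} {w : List (Option (ℕ ⊕ ℕ))} (hg : Fresh g w)
    (hw : ¬ HasBadVar w) : ¬ HasBad (substVar g w) := by
  rintro ⟨i, p, q, h⟩
  rw [substVar, List.map_eq_append_iff] at h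
  obtain ⟨p', r, rfl, -, h⟩ := h
  rw [List.map_eq_cons_iff] at h
  obtain ⟨a, r, rfl, ha, h⟩ := h
  rw [List.map_eq_cons_iff] at h
  obtain ⟨b, q', rfl, hb, -⟩ := h
  -- If one of the two letters came from the variable, then `g` would have index `i`, hence by
  -- freshness both did; but `x_i ≠ y_i`.
  rcases a with _ | a <;> rcases b with _ | b <;>
    simp only [Option.getD_some, Option.getD_none] at ha hb
  · exact absurd (ha.symm.trans hb) Sum.inl_ne_inr
  · subst ha hb; exact hg (Sum.inr i) (by simp) rfl
  · subst ha hb; exact hg (Sum.inl i) (by simp) rfl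
  · subst ha hb; exact hw ⟨i, p', q', rfl⟩

lemma substVar_injective_of_fresh {g : ℕ ⊕ ℕ} {v w : List (Option (ℕ ⊕ ℕ))} (hv : Fresh g v)
    (hw : Fresh g w) (h : substVar g v = substVar g w) : v = w := by
  induction v generalizing w with
  | nil => exact (List.map_eq_nil_iff.1 h.symm).symm
  | cons a v ih =>
    cases w with
    | nil => simp [substVar] at h
    | cons b w =>
      simp only [substVar, List.map_cons, List.cons.injEq] at h
      rw [ih (fun c hc => hv c (by simp [hc])) (fun c hc => hw c (by simp [hc])) h.2]
      congr 1
      rcases a with _ | a <;> rcases b with _ | b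
      · rfl
      · exact absurd (congrArg idx h.1.symm) (hw b (by simp))
      · exact absurd (congrArg idx h.1) (hv a (by simp))
      · exact congrArg some h.1

/-- Only finitely many letters share an index with a letter of a given word. -/
lemma finite_not_fresh (w : List (Option (ℕ ⊕ ℕ))) : {g | ¬ Fresh g w}.Finite := by
  have hfin : {o | o ∈ w}.Finite := w.finite_toSet
  have h2 : (some ⁻¹' {o | o ∈ w}).Finite := hfin.preimage (Option.some_injective _).injOn
  refine (((h2.image fun a => Sum.inl (idx a)).union (h2.image fun a => Sum.inr (idx a)))).subset ?_
  intro g hg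
  simp only [Set.mem_ofPred_eq, Fresh, not_forall, not_not] at hg
  obtain ⟨a, ha, hag⟩ := hg
  rcases g with i | i
  · exact Or.inl ⟨a, ha, congrArg Sum.inl hag⟩
  · exact Or.inr ⟨a, ha, congrArg Sum.inr hag⟩

lemma evalWord_gen_ne_zero {g : ℕ ⊕ ℕ} {w : FreeMonoid (Option (ℕ ⊕ ℕ))}
    (hg : Fresh g w.toList) (hw : ¬ HasBadVar w.toList) : evalWord (gen g) w ≠ zS := by
  intro h
  rw [evalWord_gen] at h
  rcases eq_or_bad_of_mk_eq h with h | h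
  · exact WithZero.coe_ne_zero h
  · exact not_hasBad_substVar hg hw (h.1 _ rfl)

lemma eq_of_evalWord_gen_eq {g : ℕ ⊕ ℕ} {v w : FreeMonoid (Option (ℕ ⊕ ℕ))}
    (hgv : Fresh g v.toList) (hgw : Fresh g w.toList) (hv : ¬ HasBadVar v.toList)
    (h : evalWord (gen g) v = evalWord (gen g) w) : v = w := by
  rw [evalWord_gen, evalWord_gen] at h
  rcases eq_or_bad_of_mk_eq h with h | h
  · exact FreeMonoid.toList.injective
      (substVar_injective_of_fresh hgv hgw (FreeMonoid.ofList.injective (WithZero.coe_inj.1 h)))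
  · exact absurd (h.1 _ rfl) (not_hasBad_substVar hgv hv)

/-- For every `P, Q ∈ S[x]⁺` such that `C = {s ∈ S : P(s) = Q(s)}` is a nonempty proper
subset of `S`, the intersection of `C` with the set of generators `{x_1, x_2, …, y_1, y_2, …}`
is finite. -/
theorem subbasic_closed_meets_finitely_many_generators
    (P Q : Monoid.Coprod Smon (Multiplicative ℕ))
    (hne : {s : Smon | monoidEval s P = monoidEval s Q}.Nonempty)
    (hproper : {s : Smon | monoidEval s P = monoidEval s Q} ≠ Set.univ) :
    ({s : Smon | monoidEval s P = monoidEval s Q} ∩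
      (Set.range xS ∪ Set.range yS)).Finite := by
  suffices h : {g | monoidEval (gen g) P = monoidEval (gen g) Q}.Finite by
    refine (h.image gen).subset ?_
    rintro _ ⟨hs, ⟨i, rfl⟩ | ⟨i, rfl⟩⟩
    · exact ⟨Sum.inl i, hs, rfl⟩
    · exact ⟨Sum.inr i, hs, rfl⟩
  rcases monoidEval_eq_zero_or_reduced P with hP | ⟨v, hv, hP⟩ <;>
    rcases monoidEval_eq_zero_or_reduced Q with hQ | ⟨w, hw, hQ⟩
  · exact absurd (Set.eq_univ_of_forall fun s => (hP s).trans (hQ s).symm) hproper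
  · refine (finite_not_fresh w.toList).subset fun g hg hf => ?_
    exact evalWord_gen_ne_zero hf hw (by rw [← hQ, ← hP (gen g)]; exact hg.symm)
  · refine (finite_not_fresh v.toList).subset fun g hg hf => ?_
    exact evalWord_gen_ne_zero hf hv (by rw [← hP, ← hQ (gen g)]; exact hg)
  · refine ((finite_not_fresh v.toList).union (finite_not_fresh w.toList)).subset fun g hg => ?_
    by_contra hf
    simp only [Set.mem_union, Set.mem_ofPred_eq, not_or, not_not] at hf
    have hvw : v = w := eq_of_evalWord_gen_eq hf.1 hf.2 hv (by rw [← hP, ← hQ]; exact hg)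
    exact hproper (Set.eq_univ_of_forall fun s => (hP s).trans (hvw ▸ (hQ s).symm))
end

section
/- Let S be the monoid with zero presented by generators x_1, x_2, …, y_1, y_2, … and relations x_i y_i = 0 for all i. The set D = {(a, b) ∈ S × S : a·b = 0} is not closed in S × S with respect to the product topology in which each factor S carries the semigroup Zariski topology Zar⁺(S). -/
/-- The index of a generator: `x_i` and `y_i` both have index `i`. -/
def genIdx : ℕ ⊕ ℕ → ℕ := Sum.elim id id

/-- The image in `S` of a generator, so that `genS (inl i) = x_i` and `genS (inr i) = y_i`. -/
def genS (c : ℕ ⊕ ℕ) : Smon := Scon.mk' (↑(FreeMonoid.of c) : BaseS)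

/-- The values of the substitution `c ↦ b` on generators: the partner of `c` (the other generator
of the same index) goes to `0`, and all remaining generators are fixed. -/
def substGen (c : ℕ ⊕ ℕ) (b : BaseS) (l : ℕ ⊕ ℕ) : BaseS :=
  if l = c then b else if genIdx l = genIdx c then 0 else ↑(FreeMonoid.of l)

/-- The endomorphism of the base monoid with zero extending `substGen c b`. -/
def substBase (c : ℕ ⊕ ℕ) (b : BaseS) : BaseS →*₀ BaseS :=
  WithZero.lift' (FreeMonoid.lift (substGen c b))

lemma substBase_of (c : ℕ ⊕ ℕ) (b : BaseS) (l : ℕ ⊕ ℕ) :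
    substBase c b (↑(FreeMonoid.of l) : BaseS) = substGen c b l := by
  simp [substBase]

lemma Scon_le_ker {P : Type*} [Monoid P] (f : BaseS →* P)
    (h : ∀ i, f (xBase i * yBase i) = f 0) : Scon ≤ Con.ker f := by
  refine Con.conGen_le.2 ?_
  rintro _ _ ⟨i, rfl, rfl⟩
  exact h i

lemma mk_xy (i : ℕ) : Scon.mk' (xBase i * yBase i) = Scon.mk' 0 :=
  (Con.eq _).2 (ConGen.Rel.of _ _ ⟨i, rfl, rfl⟩)

/-- The substitution respects the defining relations: for `i` the index of `c`, one of the two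
factors of `x_i y_i` is sent to `0`; for any other `i`, both factors are fixed. -/
lemma mk_substBase_xy (c : ℕ ⊕ ℕ) (b : BaseS) (i : ℕ) :
    Scon.mk' (substBase c b (xBase i * yBase i)) = Scon.mk' 0 := by
  have key : substBase c b (xBase i * yBase i) = 0 ∨
      substBase c b (xBase i * yBase i) = xBase i * yBase i := by
    rw [map_mul, xBase, yBase, substBase_of, substBase_of]
    rcases c with j | j <;> by_cases h : i = j <;> simp [substGen, genIdx, h]
  rcases key with h | h
  · rw [h]
  · rw [h, mk_xy]

/-- The endomorphism of `S` sending the generator `c` to the class of `b`, the partner of `c` to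
`0`, and fixing every other generator. -/
def substS (c : ℕ ⊕ ℕ) (b : BaseS) : Smon →* Smon :=
  Scon.lift (Scon.mk'.comp (substBase c b : BaseS →* BaseS)) <| Scon_le_ker _ fun i => by
    simpa using mk_substBase_xy c b i

lemma substS_mk (c : ℕ ⊕ ℕ) (b a : BaseS) :
    substS c b (Scon.mk' a) = Scon.mk' (substBase c b a) := rfl

lemma substS_genS (c : ℕ ⊕ ℕ) (b : BaseS) : substS c b (genS c) = Scon.mk' b := by
  rw [genS, substS_mk, substBase_of]
  simp [substGen]

/-- Only finitely many generators occur in an element of `S`, so substituting for a generator of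
large index leaves the element unchanged. -/
lemma exists_substS_eq_self (s : Smon) :
    ∃ N, ∀ c, N ≤ genIdx c → ∀ b, substS c b s = s := by
  obtain ⟨a, rfl⟩ := Con.mk'_surjective (c := Scon) s
  suffices h : ∃ N, ∀ c, N ≤ genIdx c → ∀ b, substBase c b a = a by
    obtain ⟨N, hN⟩ := h
    exact ⟨N, fun c hc b => by rw [substS_mk, hN c hc b]⟩
  induction a using WithZero.recZeroCoe with
  | zero => exact ⟨0, fun c _ b => map_zero _⟩
  | coe w =>
    induction w using FreeMonoid.inductionOn' with
    | one => exact ⟨0, fun c _ b => map_one (substBase c b)⟩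
    | of_mul l w ih =>
      obtain ⟨N, hN⟩ := ih
      refine ⟨max N (genIdx l + 1), fun c hc b => ?_⟩
      have hne : genIdx l ≠ genIdx c := by omega
      have hlc : l ≠ c := fun h => hne (congrArg genIdx h)
      rw [WithZero.coe_mul, map_mul, hN c (by omega) b, substBase_of]
      simp [substGen, hne, hlc]

/-- A generator `c` of large index behaves as the indeterminate of `W`: substituting `c ↦ b` in
`W(c)` yields `W(b)`. -/
lemma exists_substS_eval (W : Monoid.Coprod Smon (Multiplicative ℕ)) :
    ∃ N, ∀ c, N ≤ genIdx c → ∀ b,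
      substS c b (monoidEval (genS c) W) = monoidEval (Scon.mk' b) W := by
  induction W using Monoid.Coprod.induction_on with
  | inl s =>
    obtain ⟨N, hN⟩ := exists_substS_eq_self s
    exact ⟨N, fun c hc b => by simpa [monoidEval] using hN c hc b⟩
  | inr n =>
    exact ⟨0, fun c _ b => by simp [monoidEval, powersHom_apply, substS_genS]⟩
  | mul W V hW hV =>
    obtain ⟨N, hN⟩ := hW
    obtain ⟨K, hK⟩ := hV
    refine ⟨max N K, fun c hc b => ?_⟩
    rw [map_mul, map_mul, map_mul, hN c (by omega) b, hK c (by omega) b]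

/-- A nonempty Zariski-open subset of `S` contains all generators of large index: if
`W(c) = V(c)` for such a generator `c`, then substitution gives `W(m) = V(m)` for all `m`. -/
lemma exists_genS_mem_of_isOpen {U : Set Smon} (hU : @IsOpen _ (zariskiSemigroup Smon) U)
    (hne : U.Nonempty) : ∃ N, ∀ c, N ≤ genIdx c → genS c ∈ U := by
  change TopologicalSpace.GenerateOpen _ U at hU
  induction hU with
  | basic s hs =>
    obtain ⟨W, V, rfl⟩ := hs
    obtain ⟨m, hm⟩ := hne
    obtain ⟨b, rfl⟩ := Con.mk'_surjective (c := Scon) m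
    obtain ⟨N, hN⟩ := exists_substS_eval W
    obtain ⟨K, hK⟩ := exists_substS_eval V
    refine ⟨max N K, fun c hc heq => hm ?_⟩
    rw [← hN c (by omega) b, ← hK c (by omega) b, heq]
  | univ => exact ⟨0, fun _ _ => trivial⟩
  | inter s t _ _ hs ht =>
    obtain ⟨N, hN⟩ := hs hne.left
    obtain ⟨K, hK⟩ := ht hne.right
    exact ⟨max N K, fun c hc => ⟨hN c (by omega), hK c (by omega)⟩⟩
  | sUnion T _ ih =>
    obtain ⟨m, s, hs, hm⟩ := hne
    obtain ⟨N, hN⟩ := ih s hs ⟨m, hm⟩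
    exact ⟨N, fun c hc => ⟨s, hs, hN c hc⟩⟩

/-- `S` is nontrivial: sending every generator to `0` defines a homomorphism to the multiplicative
monoid of `ℕ` that separates `1` from `0`. -/
lemma one_ne_zS : (1 : Smon) ≠ zS := by
  let f : BaseS →*₀ ℕ := WithZero.lift' (FreeMonoid.lift fun _ => 0)
  have hf : Scon ≤ Con.ker (f : BaseS →* ℕ) := Scon_le_ker _ fun i => by
    simp [f, xBase, yBase]
  intro h
  have hfg : f 1 = f 0 := congrArg (Scon.lift (f : BaseS →* ℕ) hf) h
  simp at hfg

/-- The set `D = {(a, b) ∈ S × S : a·b = 0}` is not closed in `S × S` for the product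
topology in which each factor carries the semigroup Zariski topology `Zar⁺(S)`. -/
theorem mul_eq_zero_set_not_closed :
    ¬ @IsClosed (Smon × Smon)
        (@instTopologicalSpaceProd Smon Smon (zariskiSemigroup Smon) (zariskiSemigroup Smon))
        {p : Smon × Smon | p.1 * p.2 = zS} := by
  intro hD
  let _ : TopologicalSpace Smon := zariskiSemigroup Smon
  obtain ⟨U, V, hU, hV, h1U, h1V, hUV⟩ := isOpen_prod_iff.1 hD.isOpen_compl 1 1
    (by simpa using one_ne_zS)
  obtain ⟨N, hN⟩ := exists_genS_mem_of_isOpen hU ⟨1, h1U⟩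
  obtain ⟨K, hK⟩ := exists_genS_mem_of_isOpen hV ⟨1, h1V⟩
  refine hUV (Set.mk_mem_prod (hN (Sum.inl (max N K)) (le_max_left _ _))
    (hK (Sum.inr (max N K)) (le_max_right _ _))) ?_
  exact mk_xy (max N K)
end
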